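/- arXiv:0708.2684 — 2 statements merged into one kernel-verified Lean document; each statement's English description precedes it below -/
import Mathlib

section
/- Let n ≥ 2, let z₁, …, zₙ be distinct points of ℂ and σ₁, …, σₙ positive real numbers, and let w ∈ ℂ. Consider the set S = { z ∈ ℂ \ {z₁, …, zₙ} : w = z − Σⱼ σⱼ/(conj(z) − conj(zⱼ)) }. If S is finite, then S has at most 5n − 5 elements. -/
open Complex

/-!
An image of the source `w` is a fixed point of `x ↦ w + conj (r x)` on the Riemann sphere, where `r`
is the rational function `∑ j, σ j / (x - z j)`. By Fatou's argument the basin of each attracting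
fixed point (`‖r'‖ < 1`) contains a critical point of `r`: otherwise all the inverse iterates would
extend to a fixed ball, against the Schwarz lemma. Since `r` has at most `2n - 2` critical points,
at most `2n - 2` images are attracting.

An image with `‖r'‖ < 1` has positive orientation under the lens map `x ↦ x - conj (r x)`, one with
`‖r'‖ > 1` negative orientation. The lens map is proper away from the nodes, so the difference of
the two counts is the same for all regular sources. A far source has an attracting image near itself
and at most one repelling image near each node, so the difference is at least `1 - n`. A regular
source thus has at most `2 (2n - 2) + n - 1 = 5n - 5` images.

For an arbitrary source `w` and a generic direction `u`, each image of `w` is the limit of at least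
two images of `w + t u` or `w - t u` as `t` decreases to `0`, and both sources are regular for
arbitrarily small `t`. So twice the number of images of `w` is at most `2 (5n - 5)`.
-/

namespace PointMassLens

open Set Filter Topology MeasureTheory ComplexConjugate Polynomial

section Iteration

lemma exists_ball_dist_iterate_le {X : Type*} [PseudoMetricSpace X] {G : X → X} {p : X} {μ : ℝ}
    (hμ0 : 0 ≤ μ) (hμ1 : μ ≤ 1) (hG : ∀ᶠ y in 𝓝 p, dist (G y) p ≤ μ * dist y p) :
    ∃ δ > 0, ∀ y ∈ Metric.ball p δ, ∀ k, dist (G^[k] y) p ≤ μ ^ k * dist y p := by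
  obtain ⟨δ, hδ, hball⟩ := Metric.eventually_nhds_iff_ball.1 hG
  refine ⟨δ, hδ, fun y hy k => ?_⟩
  induction k with
  | zero => simp
  | succ k ih =>
    have hmem : G^[k] y ∈ Metric.ball p δ :=
      (ih.trans (mul_le_of_le_one_left dist_nonneg (pow_le_one₀ hμ0 hμ1))).trans_lt hy
    calc dist (G^[k + 1] y) p = dist (G (G^[k] y)) p := by rw [Function.iterate_succ_apply']
      _ ≤ μ * dist (G^[k] y) p := hball _ hmem
      _ ≤ μ * (μ ^ k * dist y p) := by gcongr
      _ = μ ^ (k + 1) * dist y p := by ring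

lemma eventually_dist_conj_le {f : ℂ → ℂ} {f' p : ℂ} {μ : ℝ} (hf : HasStrictDerivAt f f' p)
    (hμ : ‖f'‖ < μ) : ∀ᶠ y in 𝓝 p, dist (conj (f y)) (conj (f p)) ≤ μ * dist y p := by
  lift μ to NNReal using (norm_nonneg f').trans hμ.le
  obtain ⟨s, hs, hlip⟩ := hf.hasStrictFDerivAt.exists_lipschitzOnWith_of_nnnorm_lt μ
    (by simpa [← NNReal.coe_lt_coe] using hμ)
  filter_upwards [hs] with y hy
  rw [Complex.dist_conj_conj]
  exact hlip.dist_le_mul y hy p (mem_of_mem_nhds hs)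

end Iteration

section InverseBranches

lemma exists_continuousOn_lift_ball {V E X : Type*} [NormedAddCommGroup V] [NormedSpace ℝ V]
    [TopologicalSpace E] [TopologicalSpace X] {q : E → X} {s : Set X} (hq : IsCoveringMapOn q s)
    {p : V} {ε : ℝ} (hε : 0 < ε) {c : V → X} (hc : ContinuousOn c (Metric.ball p ε))
    (hcs : MapsTo c (Metric.ball p ε) s) {e₀ : E} (he₀ : q e₀ = c p) :
    ∃ y : V → E, ContinuousOn y (Metric.ball p ε) ∧ y p = e₀ ∧
      ∀ x ∈ Metric.ball p ε, q (y x) = c x := by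
  have hp : p ∈ Metric.ball p ε := Metric.mem_ball_self hε
  have : ContractibleSpace (Metric.ball p ε) := (convex_ball p ε).contractibleSpace ⟨p, hp⟩
  have : LocallyPathConnectedSpace (Metric.ball p ε) :=
    Metric.isOpen_ball.locallyPathConnectedSpace
  obtain ⟨F, ⟨hF₀, hF⟩, -⟩ := hq.existsUnique_continuousMap_lifts
    ⟨fun x : Metric.ball p ε => c x, continuousOn_iff_continuous_domRestrict.1 hc⟩
    (a₀ := ⟨p, hp⟩) he₀ (fun x => hcs x.2)
  have hext : ∀ x : Metric.ball p ε, Function.extend (↑) F (fun _ => e₀) (x : V) = F x :=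
    fun x => Subtype.val_injective.extend_apply F _ x
  refine ⟨Function.extend (↑) F fun _ => e₀, ?_, (hext ⟨p, hp⟩).trans hF₀, fun x hx => ?_⟩
  · exact continuousOn_iff_continuous_domRestrict.2 (F.continuous.congr fun x => (hext x).symm)
  · rw [hext ⟨x, hx⟩]
    exact congrFun hF ⟨x, hx⟩

variable {F y c : ℂ → ℂ} {F' x : ℂ}

lemma eventuallyEq_localInverse (hF : HasStrictDerivAt F F' (y x)) (hF' : F' ≠ 0)
    (hy : ContinuousAt y x) (h : ∀ᶠ t in 𝓝 x, F (y t) = c t) :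
    y =ᶠ[𝓝 x] fun t => hF.localInverse F F' (y x) hF' (c t) := by
  filter_upwards [hy.eventually (hF.hasStrictFDerivAt_equiv hF').eventually_left_inverse, h]
    with t hinv ht
  rw [← ht]
  exact hinv.symm

lemma differentiableAt_of_comp_eq (hF : HasStrictDerivAt F F' (y x)) (hF' : F' ≠ 0)
    (hy : ContinuousAt y x) (h : ∀ᶠ t in 𝓝 x, F (y t) = c t) (hc : DifferentiableAt ℂ c x) :
    DifferentiableAt ℂ y x := by
  have hinv := (hF.to_localInverse hF').hasDerivAt.differentiableAt
  rw [h.self_of_nhds] at hinv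
  exact (hinv.comp x hc).congr_of_eventuallyEq (eventuallyEq_localInverse hF hF' hy h)

lemma differentiableAt_conj_of_comp_eq (hF : HasStrictDerivAt F F' (y x)) (hF' : F' ≠ 0)
    (hy : ContinuousAt y x) (h : ∀ᶠ t in 𝓝 x, F (y t) = c t)
    (hc : DifferentiableAt ℂ (fun t => conj (c t)) x) :
    DifferentiableAt ℂ (fun t => conj (y t)) x := by
  have hinv := (hF.to_localInverse hF').hasDerivAt.conj_conj
  rw [h.self_of_nhds] at hinv
  refine (hinv.differentiableAt.comp x hc).congr_of_eventuallyEq ?_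
  filter_upwards [eventuallyEq_localInverse hF hF' hy h] with t ht
  rw [ht]
  simp only [Function.comp_apply, Complex.conj_conj]

end InverseBranches

section RationalMap

variable {A N : ℂ[X]}

lemma eval_ne_zero_of_eval_eq_mul (hcop : IsCoprime A N) {u v : ℂ}
    (h : A.eval u = v * N.eval u) : N.eval u ≠ 0 := by
  intro hN
  obtain ⟨a, b, hab⟩ := hcop
  simpa [h, hN] using congrArg (eval u) hab

lemma hasStrictDerivAt_eval_div_eval {u : ℂ} (hu : N.eval u ≠ 0) :
    HasStrictDerivAt (fun u => A.eval u / N.eval u)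
      (-(wronskian A N).eval u / N.eval u ^ 2) u := by
  refine ((A.hasStrictDerivAt u).fun_div (N.hasStrictDerivAt u) hu).congr_deriv ?_
  simp only [wronskian, eval_sub, eval_mul]
  ring

variable (A N) in
/-- The rational map `A / N` on the complement of the zeros of `N`. -/
noncomputable def ratMap (u : {u : ℂ // N.eval u ≠ 0}) : ℂ :=
  A.eval u.1 / N.eval u.1

lemma ratMap_eq_iff {u : {u : ℂ // N.eval u ≠ 0}} {v : ℂ} :
    ratMap A N u = v ↔ A.eval u.1 = v * N.eval u.1 :=
  div_eq_iff u.2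

lemma continuous_ratMap : Continuous (ratMap A N) :=
  (A.continuous.comp continuous_subtype_val).div (N.continuous.comp continuous_subtype_val)
    fun u => u.2

lemma isBounded_setOf_eval_eq_mul (hcop : IsCoprime A N) (hdeg : N.degree < A.degree)
    {K : Set ℂ} (hK : Bornology.IsBounded K) :
    Bornology.IsBounded {u | ∃ v ∈ K, A.eval u = v * N.eval u} := by
  obtain ⟨R, hR0, hR⟩ := hK.exists_pos_norm_le
  have hlt := (isLittleO_cobounded_of_degree_lt hdeg).def (c := (2 * R)⁻¹) (by positivity)
  rw [← Bornology.isCobounded_compl_iff]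
  filter_upwards [hlt] with u hu
  rintro ⟨v, hv, h⟩
  have hN : 0 < ‖N.eval u‖ := norm_pos_iff.2 (eval_ne_zero_of_eval_eq_mul hcop h)
  have hA : ‖A.eval u‖ ≤ R * ‖N.eval u‖ := by
    rw [h, norm_mul]
    gcongr
    exact hR v hv
  rw [← div_eq_inv_mul, le_div_iff₀ (by positivity)] at hu
  nlinarith

lemma isProperMap_ratMap (hcop : IsCoprime A N) (hdeg : N.degree < A.degree) :
    IsProperMap (ratMap A N) := by
  rw [isProperMap_iff_isCompact_preimage]
  refine ⟨continuous_ratMap, fun K hK => ?_⟩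
  have himage : (↑) '' (ratMap A N ⁻¹' K) =
      Prod.fst '' {q : ℂ × ℂ | q.2 ∈ K ∧ A.eval q.1 = q.2 * N.eval q.1} := by
    ext u
    constructor
    · rintro ⟨u, hu, rfl⟩
      exact ⟨(u.1, _), ⟨hu, ratMap_eq_iff.1 rfl⟩, rfl⟩
    · rintro ⟨⟨u, v⟩, ⟨hv, h⟩, rfl⟩
      refine ⟨⟨u, eval_ne_zero_of_eval_eq_mul hcop h⟩, ?_, rfl⟩
      rwa [mem_preimage, ratMap_eq_iff.2 h]
  rw [Subtype.isCompact_iff, himage]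
  refine IsCompact.image (Metric.isCompact_of_isClosed_isBounded ?_ ?_) continuous_fst
  · exact (hK.isClosed.preimage continuous_snd).inter (isClosed_eq
      (A.continuous.comp continuous_fst) (continuous_snd.mul (N.continuous.comp continuous_fst)))
  · refine ((isBounded_setOf_eval_eq_mul hcop hdeg hK.isBounded).prod hK.isBounded).subset ?_
    exact fun q hq => ⟨⟨q.2, hq⟩, hq.1⟩

lemma isCoveringMapOn_ratMap (hcop : IsCoprime A N) (hdeg : N.degree < A.degree) :
    IsCoveringMapOn (ratMap A N)
      {v | ∀ u, A.eval u = v * N.eval u → (wronskian A N).eval u ≠ 0} := by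
  refine (isProperMap_ratMap hcop hdeg).isClosedMap.isCoveringMapOn_of_isLocalHomeomorphOn
    (fun v _ => ?_) ?_
  · have hne : A - C v * N ≠ 0 := by
      intro h
      have hle := degree_smul_le v N
      rw [smul_eq_C_mul, ← sub_eq_zero.1 h] at hle
      exact hle.not_gt hdeg
    refine ((rootSet_finite (A - C v * N) ℂ).preimage Subtype.val_injective.injOn).subset
      fun u hu => ?_
    simp [mem_rootSet, hne, ratMap_eq_iff.1 hu]
  · have hloc : IsLocalHomeomorphOn (fun u => A.eval u / N.eval u)
        {u | N.eval u ≠ 0 ∧ (wronskian A N).eval u ≠ 0} := by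
      intro u hu
      have hderiv := hasStrictDerivAt_eval_div_eval (A := A) hu.1
      exact ⟨_, (hderiv.hasStrictFDerivAt_equiv
        (div_ne_zero (neg_ne_zero.2 hu.2) (pow_ne_zero 2 hu.1))).mem_toOpenPartialHomeomorph_source,
        by rw [HasStrictFDerivAt.toOpenPartialHomeomorph_coe]⟩
    have hemb : IsOpenEmbedding (Subtype.val : {u : ℂ // N.eval u ≠ 0} → ℂ) :=
      (isOpen_ne_fun N.continuous continuous_const).isOpenEmbedding_subtypeVal
    exact hloc.comp hemb.isLocalHomeomorph.isLocalHomeomorphOn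
      fun u hu => ⟨u.2, hu u.1 (ratMap_eq_iff.1 rfl)⟩

lemma exists_continuousOn_eval_eq_mul (hcop : IsCoprime A N) (hdeg : N.degree < A.degree)
    {p : ℂ} {ε : ℝ} (hε : 0 < ε) {c : ℂ → ℂ} (hc : ContinuousOn c (Metric.ball p ε))
    (hcrit : ∀ x ∈ Metric.ball p ε, ∀ u, A.eval u = c x * N.eval u → (wronskian A N).eval u ≠ 0)
    {u₀ : ℂ} (hu₀ : A.eval u₀ = c p * N.eval u₀) :
    ∃ y : ℂ → ℂ, ContinuousOn y (Metric.ball p ε) ∧ y p = u₀ ∧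
      ∀ x ∈ Metric.ball p ε, A.eval (y x) = c x * N.eval (y x) := by
  obtain ⟨y, hy, hy₀, hyc⟩ := exists_continuousOn_lift_ball (isCoveringMapOn_ratMap hcop hdeg)
    hε hc hcrit (e₀ := ⟨u₀, eval_ne_zero_of_eval_eq_mul hcop hu₀⟩) (ratMap_eq_iff.2 hu₀)
  exact ⟨fun x => (y x).1, continuous_subtype_val.comp_continuousOn hy, congrArg Subtype.val hy₀,
    fun x hx => ratMap_eq_iff.1 (hyc x hx)⟩

end RationalMap

section Fatou

/-- `h` is a holomorphic or antiholomorphic branch of the inverse of `G^[k]` on the ball of radius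
`ε` around `p`, fixing `p` and with values in `B`. -/
structure InverseBranch (G : ℂ → ℂ) (B : Set ℂ) (p : ℂ) (ε : ℝ) (k : ℕ) (h : ℂ → ℂ) : Prop where
  differentiableOn_or : DifferentiableOn ℂ h (Metric.ball p ε) ∨
    DifferentiableOn ℂ (fun x => conj (h x)) (Metric.ball p ε)
  map_center : h p = p
  mapsTo : MapsTo h (Metric.ball p ε) B
  eventually_leftInverse : ∀ᶠ y in 𝓝 p, h (G^[k] y) = y

namespace InverseBranch

variable {G : ℂ → ℂ} {B : Set ℂ} {p : ℂ} {ε : ℝ} {k : ℕ} {h : ℂ → ℂ}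

lemma continuousOn (hh : InverseBranch G B p ε k h) : ContinuousOn h (Metric.ball p ε) := by
  rcases hh.differentiableOn_or with hd | hd
  · exact hd.continuousOn
  · simpa [Function.comp_def] using continuous_conj.comp_continuousOn hd.continuousOn

lemma dist_le (hh : InverseBranch G B p ε k h) (hB : Bornology.IsBounded B) {x : ℂ}
    (hx : x ∈ Metric.ball p ε) : dist (h x) p ≤ Metric.diam B / ε * dist x p := by
  have hp : p ∈ Metric.ball p ε := Metric.mem_ball_self (dist_nonneg.trans_lt hx)
  have hdiam : ∀ x ∈ Metric.ball p ε, dist (h x) (h p) ≤ Metric.diam B := fun x hx =>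
    Metric.dist_le_diam_of_mem hB (hh.mapsTo hx) (hh.mapsTo hp)
  nth_rw 1 [← hh.map_center]
  rcases hh.differentiableOn_or with hd | hd
  · exact Complex.dist_le_div_mul_dist_of_mapsTo_ball hd hdiam hx
  · rw [← Complex.dist_conj_conj]
    refine Complex.dist_le_div_mul_dist_of_mapsTo_ball hd (fun x hx => ?_) hx
    rw [Metric.mem_closedBall, Complex.dist_conj_conj]
    exact hdiam x hx

end InverseBranch

-- The Schwarz lemma bounds the expansion of the branches at `p` uniformly in `k`, whereas the
-- inverse of `G^[k]` expands by at least `μ ^ (-k)`.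
lemma exists_forall_not_inverseBranch {G : ℂ → ℂ} {B : Set ℂ} {p : ℂ} {ε μ : ℝ} (hε : 0 < ε)
    (hB : Bornology.IsBounded B) (hμ0 : 0 ≤ μ) (hμ1 : μ < 1)
    (hG : ∀ᶠ y in 𝓝 p, dist (G y) p ≤ μ * dist y p) :
    ∃ k, ∀ h, ¬ InverseBranch G B p ε k h := by
  have hlim : Tendsto (fun k => Metric.diam B / ε * μ ^ k) atTop (𝓝 0) := by
    simpa using (tendsto_pow_atTop_nhds_zero_of_lt_one hμ0 hμ1).const_mul (Metric.diam B / ε)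
  obtain ⟨k, hk⟩ := (hlim.eventually_lt_const one_pos).exists
  obtain ⟨δ, hδ, hiter⟩ := exists_ball_dist_iterate_le hμ0 hμ1.le hG
  refine ⟨k, fun h hh => ?_⟩
  have hnear := hh.eventually_leftInverse.and
    (Filter.inter_mem (Metric.ball_mem_nhds p hδ) (Metric.ball_mem_nhds p hε))
  obtain ⟨y, ⟨hinv, hyδ, hyε⟩, hne⟩ :=
    ((hnear.filter_mono nhdsWithin_le_nhds).and (self_mem_nhdsWithin : {p}ᶜ ∈ 𝓝[≠] p)).exists
  have hpow : dist (G^[k] y) p ≤ μ ^ k * dist y p := hiter y hyδ k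
  have hmem : G^[k] y ∈ Metric.ball p ε :=
    (hpow.trans (mul_le_of_le_one_left dist_nonneg (pow_le_one₀ hμ0 hμ1.le))).trans_lt hyε
  have hlt : dist y p < dist y p := calc
    dist y p = dist (h (G^[k] y)) p := by rw [hinv]
    _ ≤ Metric.diam B / ε * dist (G^[k] y) p := hh.dist_le hB hmem
    _ ≤ Metric.diam B / ε * (μ ^ k * dist y p) :=
      mul_le_mul_of_nonneg_left hpow (div_nonneg Metric.diam_nonneg hε.le)
    _ = Metric.diam B / ε * μ ^ k * dist y p := by ring
    _ < dist y p := mul_lt_of_lt_one_left (dist_pos.2 hne) hk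
  exact hlt.false

variable {A N : ℂ[X]} {B : Set ℂ} {p : ℂ} {ε : ℝ}

lemma eventually_injective_of_hasStrictDerivAt {F : ℂ → ℂ} {F' : ℂ}
    (hF : HasStrictDerivAt F F' p) (hF' : F' ≠ 0) :
    ∀ᶠ q in 𝓝 p ×ˢ 𝓝 p, F q.1 = F q.2 → q.1 = q.2 := by
  have hinv := (hF.hasStrictFDerivAt_equiv hF').eventually_left_inverse
  filter_upwards [hinv.prod_mk hinv] with q hq heq
  rw [← hq.1, ← hq.2, heq]

lemma differentiableOn_or_of_comp_eq_conj {F F' y c : ℂ → ℂ} {U : Set ℂ} (hU : IsOpen U)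
    (hF : ∀ x ∈ U, HasStrictDerivAt F (F' x) (y x)) (hF' : ∀ x ∈ U, F' x ≠ 0)
    (hy : ContinuousOn y U) (h : ∀ x ∈ U, F (y x) = conj (c x))
    (hc : DifferentiableOn ℂ c U ∨ DifferentiableOn ℂ (fun x => conj (c x)) U) :
    DifferentiableOn ℂ y U ∨ DifferentiableOn ℂ (fun x => conj (y x)) U := by
  have hev : ∀ x ∈ U, ∀ᶠ t in 𝓝 x, F (y t) = conj (c t) := fun x hx =>
    Filter.mem_of_superset (hU.mem_nhds hx) h
  rcases hc with hc | hc
  · refine Or.inr fun x hx => (differentiableAt_conj_of_comp_eq (hF x hx) (hF' x hx)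
      (hy.continuousAt (hU.mem_nhds hx)) (hev x hx) ?_).differentiableWithinAt
    simpa only [Complex.conj_conj] using hc.differentiableAt (hU.mem_nhds hx)
  · exact Or.inl fun x hx => (differentiableAt_of_comp_eq (hF x hx) (hF' x hx)
      (hy.continuousAt (hU.mem_nhds hx)) (hev x hx)
      (hc.differentiableAt (hU.mem_nhds hx))).differentiableWithinAt

variable (A N) in
/-- The antiholomorphic rational map `conj (A / N)`. -/
noncomputable def conjRat (u : ℂ) : ℂ :=
  conj (A.eval u / N.eval u)

lemma conjRat_eq (hcop : IsCoprime A N) {u v : ℂ} (h : A.eval u = conj v * N.eval u) :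
    conjRat A N u = v := by
  rw [conjRat, (div_eq_iff (eval_ne_zero_of_eval_eq_mul hcop h)).2 h, Complex.conj_conj]

lemma tendsto_conjRat (hcop : IsCoprime A N) (hp : A.eval p = conj p * N.eval p) :
    Tendsto (conjRat A N) (𝓝 p) (𝓝 p) := by
  have hcont : ContinuousAt (conjRat A N) p := continuous_conj.continuousAt.comp
    (A.continuousAt.div N.continuousAt (eval_ne_zero_of_eval_eq_mul hcop hp))
  rwa [ContinuousAt, conjRat_eq hcop hp] at hcont

lemma InverseBranch.exists_succ (hcop : IsCoprime A N) (hdeg : N.degree < A.degree) (hε : 0 < ε)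
    (hp : A.eval p = conj p * N.eval p)
    (hinv : ∀ u v, v ∈ B → A.eval u = conj v * N.eval u → u ∈ B)
    (hcrit : ∀ u ∈ B, (wronskian A N).eval u ≠ 0) {k : ℕ} {h : ℂ → ℂ}
    (hh : InverseBranch (conjRat A N) B p ε k h) :
    ∃ y, InverseBranch (conjRat A N) B p ε (k + 1) y := by
  have hpball : p ∈ Metric.ball p ε := Metric.mem_ball_self hε
  obtain ⟨y, hy, hyp, hlift⟩ := exists_continuousOn_eval_eq_mul hcop hdeg hε
    (c := fun x => conj (h x)) (continuous_conj.comp_continuousOn hh.continuousOn)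
    (fun x hx u hu => hcrit u (hinv u _ (hh.mapsTo hx) hu)) (by rwa [hh.map_center])
  have hyB : MapsTo y (Metric.ball p ε) B := fun x hx => hinv _ _ (hh.mapsTo hx) (hlift x hx)
  have hN : ∀ x ∈ Metric.ball p ε, N.eval (y x) ≠ 0 := fun x hx =>
    eval_ne_zero_of_eval_eq_mul hcop (hlift x hx)
  have hderiv_ne : ∀ x ∈ Metric.ball p ε, -(wronskian A N).eval (y x) / N.eval (y x) ^ 2 ≠ 0 :=
    fun x hx => div_ne_zero (neg_ne_zero.2 (hcrit _ (hyB hx))) (pow_ne_zero 2 (hN x hx))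
  have heq : ∀ x ∈ Metric.ball p ε, A.eval (y x) / N.eval (y x) = conj (h x) := fun x hx =>
    (div_eq_iff (hN x hx)).2 (hlift x hx)
  refine ⟨y, ?_, hyp, hyB, ?_⟩
  · exact differentiableOn_or_of_comp_eq_conj Metric.isOpen_ball
      (fun x hx => hasStrictDerivAt_eval_div_eval (hN x hx)) hderiv_ne hy heq hh.differentiableOn_or
  · have hG := tendsto_conjRat hcop hp
    have hiter : Tendsto (conjRat A N)^[k + 1] (𝓝 p) (𝓝 p) := hG.iterate (k + 1)
    have hyc : Tendsto y (𝓝 p) (𝓝 p) := by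
      simpa only [ContinuousAt, hyp] using hy.continuousAt (Metric.ball_mem_nhds p hε)
    have hinj := eventually_injective_of_hasStrictDerivAt
      (hasStrictDerivAt_eval_div_eval (A := A) (hN p hpball)) (hderiv_ne p hpball)
    rw [hyp] at hinj
    filter_upwards [((hyc.comp hiter).prodMk tendsto_id).eventually hinj,
      hiter (Metric.ball_mem_nhds p hε), hG.eventually hh.eventually_leftInverse]
      with t hinj ht hleft
    refine hinj ?_
    simp only [Function.comp_apply, id_eq]
    rw [heq _ ht, Function.iterate_succ_apply, hleft, conjRat, Complex.conj_conj]

theorem exists_wronskian_eval_eq_zero_of_attracting (hcop : IsCoprime A N)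
    (hdeg : N.degree < A.degree) (hp : A.eval p = conj p * N.eval p)
    (hattr : ‖(wronskian A N).eval p‖ < ‖N.eval p‖ ^ 2) (hB : Bornology.IsBounded B)
    (hBp : B ∈ 𝓝 p) (hinv : ∀ u v, v ∈ B → A.eval u = conj v * N.eval u → u ∈ B) :
    ∃ u ∈ B, (wronskian A N).eval u = 0 := by
  by_contra! hcrit
  obtain ⟨ε, hε, hball⟩ := Metric.mem_nhds_iff.1 hBp
  have hN : N.eval p ≠ 0 := eval_ne_zero_of_eval_eq_mul hcop hp
  obtain ⟨μ, hμ, hμ1⟩ : ∃ μ, ‖-(wronskian A N).eval p / N.eval p ^ 2‖ < μ ∧ μ < 1 := by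
    refine exists_between ?_
    rwa [norm_div, norm_neg, norm_pow, div_lt_one (pow_pos (norm_pos_iff.2 hN) 2)]
  have hcontr : ∀ᶠ y in 𝓝 p, dist (conjRat A N y) p ≤ μ * dist y p := by
    have hle := eventually_dist_conj_le (hasStrictDerivAt_eval_div_eval hN) hμ
    rwa [(div_eq_iff hN).2 hp, Complex.conj_conj] at hle
  obtain ⟨k, hk⟩ := exists_forall_not_inverseBranch (B := B) hε hB
    ((norm_nonneg _).trans hμ.le) hμ1 hcontr
  have hbranch : ∀ k, ∃ h, InverseBranch (conjRat A N) B p ε k h := by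
    intro k
    induction k with
    | zero => exact ⟨id, Or.inl differentiableOn_id, rfl, hball, by simp⟩
    | succ k ih => exact ih.choose_spec.exists_succ hcop hdeg hε hp hinv hcrit
  exact (hbranch k).elim hk

end Fatou

section Deflection

variable {ι : Type*} {z : ι → ℂ} {σ : ι → ℂ} {x : ℂ}

lemma notMem_range_iff : x ∉ range z ↔ ∀ j, x - z j ≠ 0 := by
  simp only [mem_range, not_exists, sub_ne_zero, ne_comm]

lemma isOpen_compl_range [Finite ι] : IsOpen (range z)ᶜ :=
  (finite_range z).isClosed.isOpen_compl

variable [Fintype ι]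

variable (z σ) in
/-- The deflection of point masses `σ j` at `z j`, as a rational function: the conjugate of the
deflection angle when the masses are real. -/
noncomputable def deflection (x : ℂ) : ℂ :=
  ∑ j, σ j / (x - z j)

lemma differentiableOn_deflection : DifferentiableOn ℂ (deflection z σ) (range z)ᶜ :=
  DifferentiableOn.fun_sum fun j _ => (differentiableOn_const _).div
    (differentiableOn_id.sub_const _) fun _ hx => notMem_range_iff.1 hx j

lemma eval_nodal_ne_zero (hx : x ∉ range z) : (Lagrange.nodal Finset.univ z).eval x ≠ 0 :=
  Lagrange.eval_nodal_not_at_node fun j _ => sub_ne_zero.1 (notMem_range_iff.1 hx j)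

variable [DecidableEq ι]

variable (z σ) in
/-- The numerator of `deflection z σ` over the common denominator `Lagrange.nodal univ z`. -/
noncomputable def deflectionNum : ℂ[X] :=
  ∑ j, C (σ j) * Lagrange.nodal (Finset.univ.erase j) z

variable (z σ) in
/-- The numerator of `- deriv (deflection z σ)`; its zeros are the finite critical points of the
deflection. -/
noncomputable def critPoly : ℂ[X] :=
  ∑ j, C (σ j) * Lagrange.nodal (Finset.univ.erase j) z ^ 2

lemma nodal_univ_eq (j : ι) : Lagrange.nodal Finset.univ z =
    (X - C (z j)) * Lagrange.nodal (Finset.univ.erase j) z :=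
  Lagrange.nodal_eq_mul_nodal_erase (Finset.mem_univ j)

lemma eval_nodal_erase_ne_zero (hz : Function.Injective z) (j : ι) :
    (Lagrange.nodal (Finset.univ.erase j) z).eval (z j) ≠ 0 :=
  Lagrange.eval_nodal_not_at_node fun _ hi => hz.ne (Finset.ne_of_mem_erase hi).symm

lemma eval_nodal_erase_of_ne {i j : ι} (h : i ≠ j) :
    (Lagrange.nodal (Finset.univ.erase i) z).eval (z j) = 0 :=
  Lagrange.eval_nodal_at_node (Finset.mem_erase.2 ⟨h.symm, Finset.mem_univ j⟩)

lemma eval_deflectionNum (hx : x ∉ range z) : (deflectionNum z σ).eval x =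
    (Lagrange.nodal Finset.univ z).eval x * deflection z σ x := by
  rw [deflectionNum, eval_finsetSum, deflection, Finset.mul_sum]
  refine Finset.sum_congr rfl fun j _ => ?_
  have hj := notMem_range_iff.1 hx j
  rw [nodal_univ_eq j]
  simp only [eval_mul, eval_sub, eval_X, eval_C]
  field_simp

lemma eval_deflectionNum_node (j : ι) : (deflectionNum z σ).eval (z j) =
    σ j * (Lagrange.nodal (Finset.univ.erase j) z).eval (z j) := by
  rw [deflectionNum, eval_finsetSum, Finset.sum_eq_single_of_mem j (Finset.mem_univ j)]
  · rw [eval_mul, eval_C]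
  · intro i _ hij
    rw [eval_mul, eval_nodal_erase_of_ne hij, mul_zero]

lemma eval_critPoly_node (j : ι) : (critPoly z σ).eval (z j) =
    σ j * (Lagrange.nodal (Finset.univ.erase j) z).eval (z j) ^ 2 := by
  rw [critPoly, eval_finsetSum, Finset.sum_eq_single_of_mem j (Finset.mem_univ j)]
  · rw [eval_mul, eval_C, eval_pow]
  · intro i _ hij
    rw [eval_mul, eval_pow, eval_nodal_erase_of_ne hij, zero_pow two_ne_zero, mul_zero]

lemma degree_deflectionNum_lt :
    (deflectionNum z σ).degree < (Lagrange.nodal Finset.univ z).degree := by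
  rw [Lagrange.degree_nodal, deflectionNum, ← mem_degreeLT]
  refine Submodule.sum_mem _ fun j _ => ?_
  rw [← smul_eq_C_mul]
  refine Submodule.smul_mem _ _ (mem_degreeLT.2 ?_)
  rw [Lagrange.degree_nodal]
  exact_mod_cast Finset.card_lt_card (Finset.erase_ssubset (Finset.mem_univ j))

lemma isCoprime_nodal_deflectionNum (hz : Function.Injective z) (hσ : ∀ j, σ j ≠ 0) :
    IsCoprime (Lagrange.nodal Finset.univ z) (deflectionNum z σ) := by
  rw [isCoprime_iff_aeval_ne_zero_of_isAlgClosed ℂ ℂ]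
  intro x
  simp only [coe_aeval_eq_eval]
  by_cases hx : x ∈ range z
  · obtain ⟨j, rfl⟩ := hx
    rw [eval_deflectionNum_node]
    exact Or.inr (mul_ne_zero (hσ j) (eval_nodal_erase_ne_zero hz j))
  · exact Or.inl (eval_nodal_ne_zero hx)

lemma wronskian_X_sub_C_mul (a : ℂ) (P : ℂ[X]) : wronskian ((X - C a) * P) P = -P ^ 2 := by
  rw [wronskian, derivative_mul, derivative_X_sub_C]
  ring

lemma wronskian_nodal_deflectionNum :
    wronskian (Lagrange.nodal Finset.univ z) (deflectionNum z σ) = -critPoly z σ := by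
  rw [← wronskianBilin_apply, deflectionNum, map_sum, critPoly, ← Finset.sum_neg_distrib]
  refine Finset.sum_congr rfl fun j _ => ?_
  rw [← smul_eq_C_mul, map_smul, wronskianBilin_apply, nodal_univ_eq j, wronskian_X_sub_C_mul,
    smul_neg, smul_eq_C_mul]

lemma hasStrictDerivAt_deflection (hx : x ∉ range z) : HasStrictDerivAt (deflection z σ)
    (-(critPoly z σ).eval x / (Lagrange.nodal Finset.univ z).eval x ^ 2) x := by
  have hquot := hasStrictDerivAt_eval_div_eval (A := deflectionNum z σ) (eval_nodal_ne_zero hx)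
  rw [← wronskian_neg_eq, wronskian_nodal_deflectionNum, neg_neg] at hquot
  refine hquot.congr_of_eventuallyEq ?_
  filter_upwards [isOpen_compl_range.mem_nhds hx] with y hy
  rw [eval_deflectionNum hy, mul_div_cancel_left₀ _ (eval_nodal_ne_zero hy)]

lemma natDegree_nodal_erase_sq (j : ι) :
    (Lagrange.nodal (Finset.univ.erase j) z ^ 2).natDegree = 2 * (Fintype.card ι - 1) := by
  rw [Lagrange.nodal_monic.natDegree_pow, Lagrange.natDegree_nodal,
    Finset.card_erase_of_mem (Finset.mem_univ j), Finset.card_univ]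

lemma natDegree_critPoly_le : (critPoly z σ).natDegree ≤ 2 * (Fintype.card ι - 1) :=
  natDegree_sum_le_of_forall_le _ _ fun j _ =>
    (natDegree_C_mul_le _ _).trans (natDegree_nodal_erase_sq j).le

lemma coeff_critPoly : (critPoly z σ).coeff (2 * (Fintype.card ι - 1)) = ∑ j, σ j := by
  rw [critPoly, finsetSum_coeff]
  refine Finset.sum_congr rfl fun j _ => ?_
  rw [coeff_C_mul, ← natDegree_nodal_erase_sq j, (Lagrange.nodal_monic.pow 2).coeff_natDegree,
    mul_one]

lemma critPoly_ne_zero [Nonempty ι] (hz : Function.Injective z) (hσ : ∀ j, σ j ≠ 0) :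
    critPoly z σ ≠ 0 := by
  obtain ⟨j⟩ := ‹Nonempty ι›
  intro h
  have hj := eval_critPoly_node (z := z) (σ := σ) j
  rw [h, eval_zero] at hj
  exact mul_ne_zero (hσ j) (pow_ne_zero 2 (eval_nodal_erase_ne_zero hz j)) hj.symm

variable (z σ) in
/-- The critical points of `deflection z σ` on the Riemann sphere: near infinity the deflection is
`(∑ j, σ j) / x + O(1 / x ^ 2)`, so infinity is critical exactly when the total mass vanishes. -/
def criticalPoints : Set (OnePoint ℂ) :=
  (↑) '' ((critPoly z σ).rootSet ℂ) ∪ {c | c = OnePoint.infty ∧ ∑ j, σ j = 0}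

lemma finite_criticalPoints : (criticalPoints z σ).Finite :=
  ((rootSet_finite _ _).image _).union ((finite_singleton OnePoint.infty).subset fun _ hc => hc.1)

lemma ncard_criticalPoints_le (hι : 2 ≤ Fintype.card ι) :
    (criticalPoints z σ).ncard ≤ 2 * Fintype.card ι - 2 := by
  have hroots : ((↑) '' ((critPoly z σ).rootSet ℂ) : Set (OnePoint ℂ)).ncard ≤
      (critPoly z σ).natDegree :=
    (ncard_image_le (rootSet_finite _ _)).trans (ncard_rootSet_le _ _)
  have hdeg := natDegree_critPoly_le (z := z) (σ := σ)
  by_cases hsum : ∑ j, σ j = 0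
  · have hpred := natDegree_le_pred hdeg (coeff_critPoly.trans hsum)
    have hone : {c : OnePoint ℂ | c = OnePoint.infty ∧ ∑ j, σ j = 0}.ncard ≤ 1 :=
      (ncard_le_ncard (fun _ hc => hc.1) (finite_singleton OnePoint.infty)).trans
        (ncard_singleton _).le
    refine (ncard_union_le _ _).trans ?_
    lia
  · simp only [criticalPoints, hsum, and_false, ofPred_false, union_empty]
    lia

end Deflection

section LensMap

/-- The lens map whose deflection angle is the conjugate of `r`. -/
noncomputable def lensMap (r : ℂ → ℂ) (x : ℂ) : ℂ :=
  x - conj (r x)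

/-- The images in `Ω` of a source at `w`. -/
def fiber (Ω : Set ℂ) (r : ℂ → ℂ) (w : ℂ) : Set ℂ :=
  {x ∈ Ω | lensMap r x = w}

lemma add_conj_eq_of_mem_fiber {Ω : Set ℂ} {r : ℂ → ℂ} {w x : ℂ} (hx : x ∈ fiber Ω r w) :
    w + conj (r x) = x :=
  (sub_eq_iff_eq_add.1 hx.2).symm

end LensMap

section Basin

variable {X : Type*} [TopologicalSpace X] {f : X → X} {p x : X}

variable (f p) in
/-- The points whose orbit under `f` converges to `p`. -/
def basin : Set X :=
  {x | Tendsto (fun k => f^[k] x) atTop (𝓝 p)}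

lemma map_mem_basin_iff : f x ∈ basin f p ↔ x ∈ basin f p :=
  tendsto_add_atTop_iff_nat (f := fun k => f^[k] x) 1

end Basin

section SphereDynamics

variable {ι : Type*} [Fintype ι] {z : ι → ℂ} {σ : ι → ℂ} {w x ζ : ℂ}

variable (z σ w) in
open Classical in
/-- The map `x ↦ w + conj (deflection z σ x)` of the Riemann sphere, whose finite fixed points are
the images of the source `w`. -/
noncomputable def sphereMap (p : OnePoint ℂ) : OnePoint ℂ :=
  p.elim (w : OnePoint ℂ) fun x =>
    if x ∈ range z then OnePoint.infty else ((w + conj (deflection z σ x) : ℂ) : OnePoint ℂ)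

lemma sphereMap_infty : sphereMap z σ w OnePoint.infty = w := rfl

lemma sphereMap_node (j : ι) : sphereMap z σ w (z j) = OnePoint.infty :=
  if_pos (mem_range_self j)

lemma sphereMap_coe (hx : x ∉ range z) :
    sphereMap z σ w x = ((w + conj (deflection z σ x) : ℂ) : OnePoint ℂ) :=
  if_neg hx

lemma eventually_coe_mem_basin (hζ : ζ ∈ fiber (range z)ᶜ (deflection z σ) w)
    (hd : ‖deriv (deflection z σ) ζ‖ < 1) :
    ∀ᶠ y : ℂ in 𝓝 ζ, (y : OnePoint ℂ) ∈ basin (sphereMap z σ w) ζ := by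
  classical
  set G : ℂ → ℂ := fun y => w + conj (deflection z σ y)
  obtain ⟨μ, hμ, hμ1⟩ := exists_between hd
  have hμ0 : 0 ≤ μ := (norm_nonneg _).trans hμ.le
  have hG : ∀ᶠ y in 𝓝 ζ, dist (G y) ζ ≤ μ * dist y ζ := by
    have hderiv := hasStrictDerivAt_deflection (σ := σ) hζ.1
    rw [hderiv.hasDerivAt.deriv] at hμ
    filter_upwards [eventually_dist_conj_le hderiv hμ] with y hy
    rwa [← dist_add_left w, add_conj_eq_of_mem_fiber hζ] at hy
  obtain ⟨δ, hδ, hiter⟩ := exists_ball_dist_iterate_le hμ0 hμ1.le hG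
  obtain ⟨η, hη, hball⟩ := Metric.mem_nhds_iff.1 (isOpen_compl_range.mem_nhds hζ.1)
  filter_upwards [Metric.ball_mem_nhds ζ hδ, Metric.ball_mem_nhds ζ hη] with y hyδ hyη
  have hcoe : ∀ k, (sphereMap z σ w)^[k] y = (G^[k] y : ℂ) := by
    intro k
    induction k with
    | zero => rfl
    | succ k ih =>
      have hle := (hiter y hyδ k).trans
        (mul_le_of_le_one_left dist_nonneg (pow_le_one₀ hμ0 hμ1.le))
      rw [Function.iterate_succ_apply', ih, sphereMap_coe (hball (hle.trans_lt hyη)),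
        Function.iterate_succ_apply']
  have hlim : Tendsto (fun k => μ ^ k * dist y ζ) atTop (𝓝 0) := by
    simpa using (tendsto_pow_atTop_nhds_zero_of_lt_one hμ0 hμ1).mul_const (dist y ζ)
  have horbit : Tendsto (fun k => G^[k] y) atTop (𝓝 ζ) :=
    tendsto_iff_dist_tendsto_zero.2
      (squeeze_zero (fun _ => dist_nonneg) (hiter y hyδ) hlim)
  exact ((OnePoint.continuous_coe.tendsto ζ).comp horbit).congr fun k => (hcoe k).symm

end SphereDynamics

section Inversion

variable {ι : Type*} {z : ι → ℂ} {σ : ι → ℂ} {w ξ u v : ℂ}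

variable (ξ) in
open Classical in
/-- The coordinate of the Riemann sphere that puts infinity at `0` and `ξ` at infinity. -/
noncomputable def toSphere (u : ℂ) : OnePoint ℂ :=
  if u = 0 then OnePoint.infty else ((ξ + u⁻¹ : ℂ) : OnePoint ℂ)

lemma toSphere_zero : toSphere ξ 0 = OnePoint.infty := if_pos rfl

lemma toSphere_of_ne_zero (hu : u ≠ 0) : toSphere ξ u = ((ξ + u⁻¹ : ℂ) : OnePoint ℂ) :=
  if_neg hu

variable (z ξ) in
/-- The point masses in the coordinate `u = (x - ξ)⁻¹`. -/
noncomputable def invNodes (j : ι) : ℂ :=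
  (z j - ξ)⁻¹

variable (z σ ξ) in
/-- The masses for which the deflection of `invNodes z ξ` is `deflection z σ` in the coordinate
`u = (x - ξ)⁻¹`, up to an additive constant. -/
noncomputable def invMasses (j : ι) : ℂ :=
  -(σ j * invNodes z ξ j ^ 2)

lemma invNodes_ne_zero (hξ : ξ ∉ range z) (j : ι) : invNodes z ξ j ≠ 0 :=
  inv_ne_zero (neg_sub ξ (z j) ▸ neg_ne_zero.2 (notMem_range_iff.1 hξ j))

lemma invNodes_injective (hz : Function.Injective z) : Function.Injective (invNodes z ξ) :=
  inv_injective.comp ((sub_left_injective (b := ξ)).comp hz)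

lemma add_inv_invNodes (j : ι) : ξ + (invNodes z ξ j)⁻¹ = z j := by
  rw [invNodes, inv_inv, add_sub_cancel]

lemma add_inv_mem_range_iff : ξ + u⁻¹ ∈ range z ↔ u ∈ range (invNodes z ξ) := by
  refine exists_congr fun j => ?_
  rw [← add_inv_invNodes (z := z) (ξ := ξ) j, add_right_inj, inv_inj]

lemma invMasses_ne_zero (hξ : ξ ∉ range z) (hσ : ∀ j, σ j ≠ 0) (j : ι) :
    invMasses z σ ξ j ≠ 0 :=
  neg_ne_zero.2 (mul_ne_zero (hσ j) (pow_ne_zero 2 (invNodes_ne_zero hξ j)))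

lemma sub_invNodes (hξ : ξ ∉ range z) (hu : u ≠ 0) (j : ι) :
    u - invNodes z ξ j = -u * invNodes z ξ j * (ξ + u⁻¹ - z j) := by
  have ha := invNodes_ne_zero hξ j
  rw [← add_inv_invNodes (z := z) (ξ := ξ) j]
  field_simp
  ring

variable [Fintype ι]

lemma deflection_inv (hξ : ξ ∉ range z) (hu : u ≠ 0) (hua : u ∉ range (invNodes z ξ)) :
    deflection (invNodes z ξ) (invMasses z σ ξ) u =
      deflection z σ (ξ + u⁻¹) - deflection z σ ξ := by
  simp only [deflection, ← Finset.sum_sub_distrib]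
  refine Finset.sum_congr rfl fun j _ => ?_
  have ha := invNodes_ne_zero hξ j
  have hsub := notMem_range_iff.1 hua j
  have hx : ξ + u⁻¹ - z j = -(u - invNodes z ξ j) / (u * invNodes z ξ j) := by
    rw [sub_invNodes hξ hu j]
    field_simp
  have hξj : ξ - z j = -(invNodes z ξ j)⁻¹ := by rw [invNodes, inv_inv, neg_sub]
  rw [hx, hξj, invMasses]
  field_simp
  ring

lemma deflection_inv_zero :
    deflection (invNodes z ξ) (invMasses z σ ξ) 0 = -deflection z σ ξ := by
  simp only [deflection, ← Finset.sum_neg_distrib]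
  refine Finset.sum_congr rfl fun j _ => ?_
  rw [← neg_sub (z j) ξ, invMasses, invNodes, zero_sub]
  by_cases h : z j - ξ = 0
  · simp [h]
  · field_simp

variable [DecidableEq ι]

lemma eval_critPoly_inv (hξ : ξ ∉ range z) (hu : u ≠ 0) :
    (critPoly (invNodes z ξ) (invMasses z σ ξ)).eval u =
      -((-u) ^ (Fintype.card ι - 1) * ∏ j, invNodes z ξ j) ^ 2 *
        (critPoly z σ).eval (ξ + u⁻¹) := by
  simp only [critPoly, eval_finsetSum, Finset.mul_sum]
  refine Finset.sum_congr rfl fun j _ => ?_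
  simp only [eval_mul, eval_C, eval_pow, Lagrange.eval_nodal, sub_invNodes hξ hu,
    Finset.prod_mul_distrib, Finset.prod_const, Finset.card_erase_of_mem (Finset.mem_univ j),
    Finset.card_univ, invMasses]
  rw [← Finset.mul_prod_erase Finset.univ (invNodes z ξ) (Finset.mem_univ j)]
  ring

lemma eval_critPoly_inv_zero :
    (critPoly (invNodes z ξ) (invMasses z σ ξ)).eval 0 =
      -(∏ j, invNodes z ξ j) ^ 2 * ∑ j, σ j := by
  simp only [critPoly, eval_finsetSum, Finset.mul_sum]
  refine Finset.sum_congr rfl fun j _ => ?_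
  simp only [eval_mul, eval_C, eval_pow, Lagrange.eval_nodal, zero_sub, Finset.prod_neg, mul_pow,
    ← pow_mul, mul_comm _ 2, pow_mul (-1 : ℂ) 2, neg_one_sq, one_pow, one_mul, invMasses]
  rw [← Finset.mul_prod_erase Finset.univ (invNodes z ξ) (Finset.mem_univ j)]
  ring

lemma toSphere_mem_criticalPoints (hz : Function.Injective z) (hσ : ∀ j, σ j ≠ 0)
    (hξ : ξ ∉ range z) [Nonempty ι]
    (hu : (critPoly (invNodes z ξ) (invMasses z σ ξ)).eval u = 0) :
    toSphere ξ u ∈ criticalPoints z σ := by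
  have hprod : ∏ j, invNodes z ξ j ≠ 0 :=
    Finset.prod_ne_zero_iff.2 fun j _ => invNodes_ne_zero hξ j
  by_cases hu0 : u = 0
  · rw [hu0, eval_critPoly_inv_zero] at hu
    exact Or.inr ⟨by rw [hu0, toSphere_zero],
      (mul_eq_zero.1 hu).resolve_left (by simpa using hprod)⟩
  · rw [eval_critPoly_inv hξ hu0] at hu
    rw [toSphere_of_ne_zero hu0]
    refine Or.inl (mem_image_of_mem _ ((mem_rootSet_of_ne (critPoly_ne_zero hz hσ)).2 ?_))
    exact (mul_eq_zero.1 hu).resolve_left (by simp [hu0, hprod])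

lemma sphereMap_toSphere (hξ : ξ ∈ fiber (range z)ᶜ (deflection z σ) w)
    (hz : Function.Injective z) (hσ : ∀ j, σ j ≠ 0)
    (h : (Lagrange.nodal Finset.univ (invNodes z ξ)).eval u =
      conj v * (deflectionNum (invNodes z ξ) (invMasses z σ ξ)).eval u) :
    sphereMap z σ w (toSphere ξ u) = toSphere ξ v := by
  have hN := eval_ne_zero_of_eval_eq_mul (isCoprime_nodal_deflectionNum (invNodes_injective hz)
    (invMasses_ne_zero hξ.1 hσ)) h
  by_cases hu : u ∈ range (invNodes z ξ)
  · obtain ⟨j, rfl⟩ := hu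
    rw [Lagrange.eval_nodal_at_node (Finset.mem_univ j)] at h
    have hv : v = 0 := by simpa [hN] using h.symm
    rw [toSphere_of_ne_zero (invNodes_ne_zero hξ.1 j), add_inv_invNodes, sphereMap_node, hv,
      toSphere_zero]
  · set s := deflection (invNodes z ξ) (invMasses z σ ξ) u
    have hone : conj v * s = 1 := by
      rw [eval_deflectionNum hu] at h
      refine mul_left_cancel₀ (eval_nodal_ne_zero hu) ?_
      linear_combination -h
    have hv : v⁻¹ = conj s := by
      rw [← Complex.conj_conj v, ← map_inv₀, inv_eq_of_mul_eq_one_right hone]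
    have hv0 : v ≠ 0 := by
      rintro rfl
      simp at hone
    have hw : ξ - conj (deflection z σ ξ) = w := hξ.2
    rw [toSphere_of_ne_zero hv0, hv]
    by_cases hu0 : u = 0
    · rw [hu0, toSphere_zero, sphereMap_infty]
      simp only [s, hu0, deflection_inv_zero, map_neg]
      rw [← sub_eq_add_neg, hw]
    · rw [toSphere_of_ne_zero hu0, sphereMap_coe (add_inv_mem_range_iff.not.2 hu)]
      simp only [s, deflection_inv hξ.1 hu0 hu, map_sub]
      refine congrArg _ ?_
      linear_combination -hw

end Inversion

section Attracting

variable {ι : Type*} [Fintype ι] {z : ι → ℂ} {σ : ι → ℂ} {w ζ ξ : ℂ}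

lemma add_inv_inv_sub (ζ ξ : ℂ) : ξ + (ζ - ξ)⁻¹⁻¹ = ζ := by
  rw [inv_inv, add_sub_cancel]

lemma preimage_basin_mem_nhds (hζ : ζ ∈ fiber (range z)ᶜ (deflection z σ) w)
    (hζd : ‖deriv (deflection z σ) ζ‖ < 1) (hne : ζ ≠ ξ) :
    toSphere ξ ⁻¹' basin (sphereMap z σ w) ζ ∈ 𝓝 (ζ - ξ)⁻¹ := by
  have hp : (ζ - ξ)⁻¹ ≠ 0 := inv_ne_zero (sub_ne_zero.2 hne)
  have hcont : Tendsto (fun u : ℂ => ξ + u⁻¹) (𝓝 (ζ - ξ)⁻¹) (𝓝 ζ) := by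
    have hcont' : ContinuousAt (fun u : ℂ => ξ + u⁻¹) (ζ - ξ)⁻¹ :=
      continuousAt_const.add (continuousAt_inv₀ hp)
    rwa [ContinuousAt, add_inv_inv_sub] at hcont'
  filter_upwards [hcont.eventually (eventually_coe_mem_basin hζ hζd), isOpen_ne.mem_nhds hp]
    with u hu hu0
  rwa [mem_preimage, toSphere_of_ne_zero hu0]

lemma isBounded_preimage_basin (hξ : ξ ∈ fiber (range z)ᶜ (deflection z σ) w)
    (hξd : ‖deriv (deflection z σ) ξ‖ < 1) (hne : ζ ≠ ξ) :
    Bornology.IsBounded (toSphere ξ ⁻¹' basin (sphereMap z σ w) ζ) := by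
  rw [← Bornology.isCobounded_compl_iff]
  have hlim : Tendsto (fun u : ℂ => ξ + u⁻¹) (Bornology.cobounded ℂ) (𝓝 ξ) := by
    simpa using tendsto_inv₀_cobounded.const_add ξ
  filter_upwards [hlim.eventually (eventually_coe_mem_basin hξ hξd),
    Bornology.eventually_ne_cobounded 0] with u hu hu0 hmem
  rw [mem_preimage, toSphere_of_ne_zero hu0] at hmem
  exact hne (OnePoint.coe_injective (tendsto_nhds_unique hmem hu))

lemma deriv_deflection_inv {u : ℂ} (hξ : ξ ∉ range z) (hu : u ≠ 0)
    (hua : u ∉ range (invNodes z ξ)) :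
    deriv (deflection (invNodes z ξ) (invMasses z σ ξ)) u =
      deriv (deflection z σ) (ξ + u⁻¹) * -(u ^ 2)⁻¹ := by
  have heq : deflection (invNodes z ξ) (invMasses z σ ξ) =ᶠ[𝓝 u]
      fun v => deflection z σ (ξ + v⁻¹) - deflection z σ ξ := by
    filter_upwards [isOpen_ne.mem_nhds hu, isOpen_compl_range.mem_nhds hua] with v hv hva
    exact deflection_inv hξ hv hva
  have hderiv : HasDerivAt (deflection z σ) (deriv (deflection z σ) (ξ + u⁻¹)) (ξ + u⁻¹) :=
    (differentiableOn_deflection.differentiableAt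
      (isOpen_compl_range.mem_nhds (add_inv_mem_range_iff.not.2 hua))).hasDerivAt
  rw [heq.deriv_eq]
  exact ((hderiv.comp u ((hasDerivAt_inv hu).const_add ξ)).sub_const _).deriv

variable [DecidableEq ι]

lemma eval_nodal_inv_eq (hζ : ζ ∈ fiber (range z)ᶜ (deflection z σ) w)
    (hξ : ξ ∈ fiber (range z)ᶜ (deflection z σ) w) (hne : ζ ≠ ξ) :
    (Lagrange.nodal Finset.univ (invNodes z ξ)).eval (ζ - ξ)⁻¹ =
      conj (ζ - ξ)⁻¹ * (deflectionNum (invNodes z ξ) (invMasses z σ ξ)).eval (ζ - ξ)⁻¹ := by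
  have hp : (ζ - ξ)⁻¹ ≠ 0 := inv_ne_zero (sub_ne_zero.2 hne)
  have hua : (ζ - ξ)⁻¹ ∉ range (invNodes z ξ) := by
    rw [← add_inv_mem_range_iff, add_inv_inv_sub]
    exact hζ.1
  have hdefl : deflection z σ ζ - deflection z σ ξ = conj (ζ - ξ) := by
    apply star_injective
    change conj (_ - _) = conj (conj _)
    rw [Complex.conj_conj, map_sub]
    linear_combination add_conj_eq_of_mem_fiber hζ - add_conj_eq_of_mem_fiber hξ
  have hne' : conj (ζ - ξ) ≠ 0 := (_root_.map_ne_zero _).2 (sub_ne_zero.2 hne)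
  rw [eval_deflectionNum hua, deflection_inv hξ.1 hp hua, add_inv_inv_sub, hdefl, map_inv₀]
  field_simp

lemma norm_wronskian_inv_lt (hζ : ζ ∈ fiber (range z)ᶜ (deflection z σ) w)
    (hζd : ‖deriv (deflection z σ) ζ‖ < 1) (hξ : ξ ∈ fiber (range z)ᶜ (deflection z σ) w)
    (hne : ζ ≠ ξ) :
    ‖(wronskian (Lagrange.nodal Finset.univ (invNodes z ξ))
        (deflectionNum (invNodes z ξ) (invMasses z σ ξ))).eval (ζ - ξ)⁻¹‖ <
      ‖(deflectionNum (invNodes z ξ) (invMasses z σ ξ)).eval (ζ - ξ)⁻¹‖ ^ 2 := by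
  have hnodal := eval_nodal_inv_eq hζ hξ hne
  set p := (ζ - ξ)⁻¹
  have hp : 0 < ‖p‖ := norm_pos_iff.2 (inv_ne_zero (sub_ne_zero.2 hne))
  have hpζ : ξ + p⁻¹ = ζ := add_inv_inv_sub ζ ξ
  have hpa : p ∉ range (invNodes z ξ) := by
    rw [← add_inv_mem_range_iff, hpζ]
    exact hζ.1
  have hA : 0 < ‖(Lagrange.nodal Finset.univ (invNodes z ξ)).eval p‖ :=
    norm_pos_iff.2 (eval_nodal_ne_zero hpa)
  have hderiv := deriv_deflection_inv (σ := σ) hξ.1 (norm_pos_iff.1 hp) hpa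
  rw [hpζ, (hasStrictDerivAt_deflection hpa).hasDerivAt.deriv, ← eval_neg,
    ← wronskian_nodal_deflectionNum] at hderiv
  have hnorm := congrArg norm hderiv
  simp only [norm_div, norm_mul, norm_neg, norm_inv, norm_pow] at hnorm
  rw [hnodal, norm_mul, RCLike.norm_conj] at hnorm hA
  have hN := pos_of_mul_pos_right hA hp.le
  rw [div_eq_iff (by positivity)] at hnorm
  rw [hnorm]
  calc _ = ‖deriv (deflection z σ) ζ‖ * ‖eval p _‖ ^ 2 := by
        field_simp
    _ < ‖eval p _‖ ^ 2 := mul_lt_of_lt_one_left (by positivity) hζd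

-- Sending another attracting image `ξ` to infinity makes the basin of `ζ` bounded.
theorem exists_criticalPoint_mem_basin (hz : Function.Injective z) (hσ : ∀ j, σ j ≠ 0)
    [Nonempty ι] (hζ : ζ ∈ fiber (range z)ᶜ (deflection z σ) w)
    (hζd : ‖deriv (deflection z σ) ζ‖ < 1) (hξ : ξ ∈ fiber (range z)ᶜ (deflection z σ) w)
    (hξd : ‖deriv (deflection z σ) ξ‖ < 1) (hne : ζ ≠ ξ) :
    ∃ c ∈ criticalPoints z σ, c ∈ basin (sphereMap z σ w) ζ := by
  obtain ⟨u, hu, hcrit⟩ := exists_wronskian_eval_eq_zero_of_attracting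
    (isCoprime_nodal_deflectionNum (invNodes_injective hz) (invMasses_ne_zero hξ.1 hσ))
    degree_deflectionNum_lt (eval_nodal_inv_eq hζ hξ hne) (norm_wronskian_inv_lt hζ hζd hξ hne)
    (isBounded_preimage_basin hξ hξd hne) (preimage_basin_mem_nhds hζ hζd hne)
    fun u v hv huv => map_mem_basin_iff.1 (sphereMap_toSphere hξ hz hσ huv ▸ hv)
  rw [wronskian_nodal_deflectionNum, eval_neg, neg_eq_zero] at hcrit
  exact ⟨toSphere ξ u, toSphere_mem_criticalPoints hz hσ hξ.1 hcrit, hu⟩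

end Attracting

theorem ncard_attracting_le {ι : Type*} [Fintype ι] (hι : 2 ≤ Fintype.card ι) {z σ : ι → ℂ}
    (hz : Function.Injective z) (hσ : ∀ j, σ j ≠ 0) (w : ℂ) :
    {x ∈ fiber (range z)ᶜ (deflection z σ) w | ‖deriv (deflection z σ) x‖ < 1}.ncard ≤
      2 * Fintype.card ι - 2 := by
  classical
  have : Nonempty ι := Fintype.card_pos_iff.1 (by lia)
  rcases Set.subsingleton_or_nontrivial
    {x ∈ fiber (range z)ᶜ (deflection z σ) w | ‖deriv (deflection z σ) x‖ < 1} with hsub | hnt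
  · have hone := (ncard_le_one hsub.finite).2 fun a ha b hb => hsub ha hb
    lia
  · have hcrit : ∀ ζ ∈ {x ∈ fiber (range z)ᶜ (deflection z σ) w | ‖deriv (deflection z σ) x‖ < 1},
        ∃ c ∈ criticalPoints z σ, c ∈ basin (sphereMap z σ w) ζ := fun ζ hζ => by
      obtain ⟨ξ, hξ, hne⟩ := hnt.exists_ne ζ
      exact exists_criticalPoint_mem_basin hz hσ hζ.1 hζ.2 hξ.1 hξ.2 hne.symm
    choose! c hc hbasin using hcrit
    refine (ncard_le_ncard_of_injOn c hc (fun x hx y hy hxy => ?_) finite_criticalPoints).trans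
      (ncard_criticalPoints_le hι)
    have hy' := hbasin y hy
    rw [← hxy] at hy'
    exact OnePoint.coe_injective (tendsto_nhds_unique (hbasin x hx) hy')

section LensDeriv

/-- The real derivative of a lens map whose deflection has complex derivative `conj a`. -/
noncomputable def lensDeriv (a : ℂ) : ℂ →L[ℝ] ℂ :=
  ContinuousLinearMap.id ℝ ℂ - (conjCLE : ℂ →L[ℝ] ℂ).comp (ContinuousLinearMap.mul ℝ ℂ a)

lemma lensDeriv_apply (a e : ℂ) : lensDeriv a e = e - conj (a * e) := by
  simp [lensDeriv]

lemma det_lensDeriv (a : ℂ) : (lensDeriv a).det = 1 - ‖a‖ ^ 2 := by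
  rw [ContinuousLinearMap.det, ← LinearMap.det_toMatrix basisOneI, Matrix.det_fin_two,
    ← normSq_eq_norm_sq, normSq_apply]
  simp only [LinearMap.toMatrix_apply, ContinuousLinearMap.coe_coe, lensDeriv_apply]
  simp only [coe_basisOneI, Matrix.cons_val_zero, mul_one, map_sub, Finsupp.coe_sub,
    coe_basisOneI_repr, one_re, one_im, conj_re, conj_im, Pi.sub_apply, Matrix.cons_val_one,
    Matrix.cons_val_fin_one, map_mul, conj_I, mul_neg, sub_neg_eq_add, map_add, Finsupp.coe_add,
    I_re, I_im, mul_re, mul_zero, zero_add, mul_im, add_zero, Pi.add_apply]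
  ring

lemma lensDeriv_add_conj (a u : ℂ) :
    lensDeriv a (u + conj (a * u)) = (1 - ‖a‖ ^ 2 : ℝ) • u := by
  have hnorm : (‖a‖ : ℂ) ^ 2 = conj a * a := (conj_mul' a).symm
  simp only [lensDeriv_apply, map_mul, map_add, conj_conj, real_smul]
  push_cast
  rw [hnorm]
  ring

lemma hasStrictFDerivAt_lensMap {r : ℂ → ℂ} {a x : ℂ} (hr : HasStrictDerivAt r a x) :
    HasStrictFDerivAt (lensMap r) (lensDeriv a) x := by
  have hmul : ContinuousLinearMap.mul ℝ ℂ a =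
      (ContinuousLinearMap.toSpanSingleton ℂ a).restrictScalars ℝ := by
    ext y
    simp [mul_comm]
  rw [lensDeriv, hmul]
  exact (hasStrictFDerivAt_id x).sub
    (conjCLE.hasStrictFDerivAt.comp x (hr.hasStrictFDerivAt.restrictScalars ℝ))

variable {Ω : Set ℂ} {r : ℂ → ℂ}

lemma contDiffOn_lensMap (hΩ : IsOpen Ω) (hr : DifferentiableOn ℂ r Ω) :
    ContDiffOn ℝ 1 (lensMap r) Ω :=
  contDiffOn_id.sub
    (conjCLE.contDiff.comp_contDiffOn ((hr.contDiffOn hΩ).restrict_scalars ℝ))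

lemma hasStrictDerivAt_of_differentiableOn (hΩ : IsOpen Ω) (hr : DifferentiableOn ℂ r Ω) {x : ℂ}
    (hx : x ∈ Ω) : HasStrictDerivAt r (deriv r x) x :=
  (hr.analyticOnNhd hΩ x hx).hasStrictDerivAt

end LensDeriv

section CompactSupport

lemma hasCompactSupport_indicator {X M : Type*} [TopologicalSpace X] [R1Space X] [Zero M]
    {Ω K : Set X} {g : X → M} (hK : IsCompact K)
    (hg0 : ∀ x ∈ Ω \ K, g x = 0) : HasCompactSupport (Ω.indicator g) :=
  HasCompactSupport.intro hK fun x hx => by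
    by_cases hxΩ : x ∈ Ω
    · rw [indicator_of_mem hxΩ, hg0 x ⟨hxΩ, hx⟩]
    · exact indicator_of_notMem hxΩ g

variable {E F : Type*} [NormedAddCommGroup E] [NormedSpace ℝ E]
  [NormedAddCommGroup F] [NormedSpace ℝ F]

lemma contDiff_indicator {Ω K : Set E} {g : E → F} {n : WithTop ℕ∞} (hΩ : IsOpen Ω)
    (hK : IsClosed K) (hKΩ : K ⊆ Ω) (hg : ContDiffOn ℝ n g Ω) (hg0 : ∀ x ∈ Ω \ K, g x = 0) :
    ContDiff ℝ n (Ω.indicator g) := by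
  refine contDiff_iff_contDiffAt.2 fun x => ?_
  by_cases hx : x ∈ Ω
  · refine (hg.contDiffAt (hΩ.mem_nhds hx)).congr_of_eventuallyEq ?_
    filter_upwards [hΩ.mem_nhds hx] with y hy using indicator_of_mem hy g
  · refine contDiffAt_const (c := 0) |>.congr_of_eventuallyEq ?_
    filter_upwards [hK.isOpen_compl.mem_nhds fun h => hx (hKΩ h)] with y hy
    by_cases hyΩ : y ∈ Ω
    · rw [indicator_of_mem hyΩ, hg0 y ⟨hyΩ, hy⟩]
    · exact indicator_of_notMem hyΩ g

lemma integral_fderiv_eq_zero [FiniteDimensional ℝ E] [MeasurableSpace E] [BorelSpace E]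
    {μ : Measure E} [μ.IsAddHaarMeasure] {f : E → F} (hf : ContDiff ℝ 1 f)
    (hs : HasCompactSupport f) (v : E) : ∫ x, fderiv ℝ f x v ∂μ = 0 := by
  have hint : Integrable (fun x => fderiv ℝ f x v) μ :=
    ((hf.continuous_fderiv one_ne_zero).clm_apply continuous_const).integrable_of_hasCompactSupport
      (hs.fderiv_apply (𝕜 := ℝ) v)
  simpa using integral_bilinear_fderiv_right_eq_neg_left_of_integrable (μ := μ)
    (f := fun _ : E => (1 : ℝ)) (B := ContinuousLinearMap.lsmul ℝ ℝ) (v := v)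
    (by simp) (by simpa using hint)
    (by simpa using hf.continuous.integrable_of_hasCompactSupport hs)
    (fun x _ => by fun_prop) fun x _ => hf.differentiable one_ne_zero x

lemma hasDerivAt_integral_comp_sub [CompleteSpace F] {φ : ℝ → F} (hφ : Continuous φ) (a b : ℝ) :
    HasDerivAt (fun s => ∫ t in a..b, φ (t - s)) (φ a - φ b) 0 := by
  have hprim : ∀ x, HasDerivAt (fun x => ∫ t in (0 : ℝ)..x, φ t) (φ x) x := fun x =>
    (hφ.integral_hasStrictDerivAt 0 x).hasDerivAt
  have hshift : (fun s => ∫ t in a..b, φ (t - s)) =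
      fun s => (∫ t in (0 : ℝ)..b - s, φ t) - ∫ t in (0 : ℝ)..a - s, φ t := by
    funext s
    rw [intervalIntegral.integral_interval_sub_left
      (hφ.intervalIntegrable _ _) (hφ.intervalIntegrable _ _),
      intervalIntegral.integral_comp_sub_right φ]
  rw [hshift]
  refine (((hprim (b - 0)).comp_const_sub b 0).sub
    ((hprim (a - 0)).comp_const_sub a 0)).congr_deriv ?_
  simp only [sub_zero]
  abel

-- `H` is the integral of the translates of `ρ` along the segment from `w₀` to `w₁`.
open scoped Convolution in
lemma exists_fderiv_apply_sub_eq [MeasurableSpace E] [BorelSpace E] {ρ : E → ℝ}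
    (hρ : ContDiff ℝ 1 ρ) (hs : HasCompactSupport ρ) (w₀ w₁ : E) :
    ∃ H : E → ℝ, ContDiff ℝ 1 H ∧ HasCompactSupport H ∧
      ∀ y, fderiv ℝ H y (w₁ - w₀) = ρ (y - w₀) - ρ (y - w₁) := by
  set γ : ℝ → E := fun t => w₀ + t • (w₁ - w₀)
  have hγ : Continuous γ := by fun_prop
  set μ : Measure E := (volume.restrict (Ioc (0 : ℝ) 1)).map γ
  set L := ContinuousLinearMap.lsmul ℝ ℝ (E := ℝ)
  have hint : ∀ y, ((fun _ => (1 : ℝ)) ⋆[L, μ] ρ) y = ∫ t in (0 : ℝ)..1, ρ (y - γ t) := fun y => by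
    have hcont : Continuous fun v => L 1 (ρ (y - v)) :=
      (L 1).continuous.comp (hρ.continuous.comp (by fun_prop))
    rw [convolution_def, integral_map hγ.aemeasurable hcont.aestronglyMeasurable,
      intervalIntegral.integral_of_le zero_le_one]
    simp [L]
  have hloc : LocallyIntegrable (fun _ : E => (1 : ℝ)) μ := locallyIntegrable_const 1
  refine ⟨(fun _ => (1 : ℝ)) ⋆[L, μ] ρ, hs.contDiff_convolution_right L hloc hρ, ?_, fun y => ?_⟩
  · have hK := hs.isCompact.add ((isCompact_Icc (a := (0 : ℝ)) (b := 1)).image hγ)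
    refine HasCompactSupport.intro hK fun y hy => ?_
    rw [hint]
    refine intervalIntegral.integral_zero_ae (ae_of_all _ fun t ht => ?_)
    by_contra hne
    rw [uIoc_of_le zero_le_one] at ht
    exact hy ⟨_, subset_tsupport ρ hne, γ t, mem_image_of_mem γ (Ioc_subset_Icc_self ht),
      sub_add_cancel y _⟩
  · have hφ : Continuous fun t => ρ (y - γ t) := by fun_prop
    have hline : ∀ s : ℝ, ((fun _ => (1 : ℝ)) ⋆[L, μ] ρ) (y + s • (w₁ - w₀)) =
        ∫ t in (0 : ℝ)..1, ρ (y - γ (t - s)) := fun s => by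
      rw [hint]
      refine intervalIntegral.integral_congr fun t _ => congrArg ρ ?_
      simp only [γ]
      module
    have hH := (hs.contDiff_convolution_right L hloc hρ).differentiable one_ne_zero y
    rw [← hH.lineDeriv_eq_fderiv, lineDeriv, funext hline,
      (hasDerivAt_integral_comp_sub hφ 0 1).deriv]
    simp only [γ, zero_smul, one_smul, add_zero, add_sub_cancel]

end CompactSupport

section DegreeIntegral

variable {Ω : Set ℂ} {r : ℂ → ℂ}

lemma integral_divergence_eq_zero {Y : ℂ → ℂ} (hY : ContDiff ℝ 1 Y) (hs : HasCompactSupport Y) :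
    ∫ x, ((fderiv ℝ Y x 1).re + (fderiv ℝ Y x I).im) = 0 := by
  have hint : ∀ v, Integrable fun x => fderiv ℝ Y x v := fun v =>
    ((hY.continuous_fderiv one_ne_zero).clm_apply continuous_const).integrable_of_hasCompactSupport
      (hs.fderiv_apply (𝕜 := ℝ) v)
  calc ∫ x, ((fderiv ℝ Y x 1).re + (fderiv ℝ Y x I).im)
      = (∫ x, fderiv ℝ Y x 1).re + (∫ x, fderiv ℝ Y x I).im :=
        (integral_add (hint 1).re (hint I).im).trans
          (congrArg₂ _ (integral_re (hint 1)) (integral_im (hint I)))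
    _ = 0 := by simp [integral_fderiv_eq_zero hY hs]

lemma clm_lensDeriv_re_add_im (A : ℂ →L[ℝ] ℝ) (a u : ℂ) :
    A (lensDeriv a 1) * (u + conj (a * u)).re + A (lensDeriv a I) * (u + conj (a * u)).im =
      A u * (1 - ‖a‖ ^ 2) := by
  have hA := congrArg A (lensDeriv_add_conj a u)
  rw [map_smul, smul_eq_mul, mul_comm (1 - ‖a‖ ^ 2)] at hA
  rw [← hA]
  set v := u + conj (a * u)
  have hv : v = v.re • (1 : ℂ) + v.im • I := by simp
  conv_rhs => rw [hv]
  simp only [map_add, map_smul, smul_eq_mul]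
  ring

/- For `Y = F (lensMap r x) * (u + conj (r' u))` the divergence of the plane field `Y` is the
integrand: the terms in `r''` cancel because `conj (r' u)` is antiholomorphic. -/
lemma divergence_lensMap (hΩ : IsOpen Ω) (hr : DifferentiableOn ℂ r Ω) {F : ℂ → ℝ}
    (hF : Differentiable ℝ F) (u : ℂ) {x : ℂ} (hx : x ∈ Ω) :
    (fderiv ℝ (fun y => F (lensMap r y) • (u + conj (deriv r y * u))) x 1).re +
        (fderiv ℝ (fun y => F (lensMap r y) • (u + conj (deriv r y * u))) x I).im =
      fderiv ℝ F (lensMap r x) u * (1 - ‖deriv r x‖ ^ 2) := by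
  set c := deriv (deriv r) x
  have hcoeff := hF (lensMap r x) |>.hasFDerivAt.comp x
    (hasStrictFDerivAt_lensMap (hasStrictDerivAt_of_differentiableOn hΩ hr hx)).hasFDerivAt
  have hconj : HasFDerivAt (fun y => u + conj (deriv r y * u))
      ((conjCLE : ℂ →L[ℝ] ℂ).comp
        ((ContinuousLinearMap.toSpanSingleton ℂ (c * u)).restrictScalars ℝ)) x := by
    have hderiv := (hasStrictDerivAt_of_differentiableOn hΩ (hr.deriv hΩ) hx).hasDerivAt.mul_const u
    exact (conjCLE.hasFDerivAt.comp x (hderiv.hasFDerivAt.restrictScalars ℝ)).const_add u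
  have hfderiv := fun e => DFunLike.congr_fun (hcoeff.smul hconj).fderiv e
  simp only [add_apply, smul_apply, ContinuousLinearMap.smulRight_apply,
    ContinuousLinearMap.comp_apply, Function.comp_def, Pi.smul_def'] at hfderiv
  rw [hfderiv, hfderiv, ← clm_lensDeriv_re_add_im]
  simp only [ContinuousLinearMap.coe_restrictScalars',
    ContinuousLinearMap.toSpanSingleton_apply, smul_eq_mul, one_mul,
    ContinuousLinearEquiv.coe_coe, ContinuousAlgEquiv.coeCLE_apply, conjCAE_apply, map_mul,
    real_smul, smul_add, add_re, mul_re, ofReal_re, conj_re, conj_im, mul_neg, neg_mul, neg_neg,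
    ofReal_im, mul_im, zero_mul, sub_zero, conj_I, smul_neg, add_im, neg_im, I_re, I_im, zero_add,
    zero_sub, neg_add_rev, add_zero]
  ring

variable (hΩ : IsOpen Ω) (hr : DifferentiableOn ℂ r Ω)
  (hK : ∀ K, IsCompact K → IsCompact (Ω ∩ lensMap r ⁻¹' K))

include hΩ hr hK

lemma integrableOn_comp_lensMap_mul {φ : ℂ → ℝ} (hφ : Continuous φ) (hs : HasCompactSupport φ) :
    IntegrableOn (fun x => φ (lensMap r x) * (1 - ‖deriv r x‖ ^ 2)) Ω := by
  have hzero : ∀ x ∈ Ω \ (Ω ∩ lensMap r ⁻¹' tsupport φ),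
      φ (lensMap r x) * (1 - ‖deriv r x‖ ^ 2) = 0 := fun x hx => by
    rw [image_eq_zero_of_notMem_tsupport fun h => hx.2 ⟨hx.1, h⟩, zero_mul]
  have hcont : ContinuousOn (fun x => φ (lensMap r x) * (1 - ‖deriv r x‖ ^ 2)) Ω :=
    (hφ.comp_continuousOn (contDiffOn_lensMap hΩ hr).continuousOn).mul
      (continuousOn_const.sub ((hr.deriv hΩ).continuousOn.norm.pow 2))
  rw [← integrable_indicator_iff hΩ.measurableSet]
  exact (contDiff_indicator hΩ (hK _ hs.isCompact).isClosed inter_subset_left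
    (contDiffOn_zero.2 hcont) hzero).continuous.integrable_of_hasCompactSupport
      (hasCompactSupport_indicator (hK _ hs.isCompact) hzero)

lemma setIntegral_fderiv_comp_lensMap_eq_zero {F : ℂ → ℝ} (hF : ContDiff ℝ 1 F)
    (hs : HasCompactSupport F) (u : ℂ) :
    ∫ x in Ω, fderiv ℝ F (lensMap r x) u * (1 - ‖deriv r x‖ ^ 2) = 0 := by
  set g : ℂ → ℂ := fun x => F (lensMap r x) • (u + conj (deriv r x * u))
  have hzero : ∀ x ∈ Ω \ (Ω ∩ lensMap r ⁻¹' tsupport F), g x = 0 := fun x hx => by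
    simp only [g]
    rw [image_eq_zero_of_notMem_tsupport fun h => hx.2 ⟨hx.1, h⟩, zero_smul]
  have hg : ContDiffOn ℝ 1 g Ω :=
    (hF.comp_contDiffOn (contDiffOn_lensMap hΩ hr)).smul (contDiffOn_const.add
      (conjCLE.contDiff.comp_contDiffOn
        ((((hr.deriv hΩ).contDiffOn hΩ).restrict_scalars ℝ).mul contDiffOn_const)))
  have hY := contDiff_indicator hΩ (hK _ hs.isCompact).isClosed inter_subset_left hg hzero
  have hdiv : EqOn (fun x => (fderiv ℝ (Ω.indicator g) x 1).re +
      (fderiv ℝ (Ω.indicator g) x I).im)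
      (fun x => fderiv ℝ F (lensMap r x) u * (1 - ‖deriv r x‖ ^ 2)) Ω := fun x hx => by
    have heq : Ω.indicator g =ᶠ[𝓝 x] g := by
      filter_upwards [hΩ.mem_nhds hx] with y hy using indicator_of_mem hy g
    simp only [heq.fderiv_eq]
    exact divergence_lensMap hΩ hr (hF.differentiable one_ne_zero) u hx
  rw [← setIntegral_congr_fun hΩ.measurableSet hdiv,
    setIntegral_eq_integral_of_forall_compl_eq_zero fun x hx => ?_]
  · exact integral_divergence_eq_zero hY (hasCompactSupport_indicator (hK _ hs.isCompact) hzero)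
  · have heq : Ω.indicator g =ᶠ[𝓝 x] fun _ => 0 := by
      filter_upwards [(hK _ hs.isCompact).isClosed.isOpen_compl.mem_nhds fun h => hx h.1] with y hy
      by_cases hyΩ : y ∈ Ω
      · rw [indicator_of_mem hyΩ, hzero y ⟨hyΩ, hy⟩]
      · exact indicator_of_notMem hyΩ g
    simp [heq.fderiv_eq]

theorem setIntegral_comp_lensMap_sub_eq {ρ : ℂ → ℝ} (hρ : ContDiff ℝ 1 ρ)
    (hs : HasCompactSupport ρ) (w₀ w₁ : ℂ) :
    ∫ x in Ω, ρ (lensMap r x - w₀) * (1 - ‖deriv r x‖ ^ 2) =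
      ∫ x in Ω, ρ (lensMap r x - w₁) * (1 - ‖deriv r x‖ ^ 2) := by
  obtain ⟨H, hH, hHs, hfderiv⟩ := exists_fderiv_apply_sub_eq hρ hs w₀ w₁
  have hint : ∀ w, IntegrableOn (fun x => ρ (lensMap r x - w) * (1 - ‖deriv r x‖ ^ 2)) Ω :=
    fun w => integrableOn_comp_lensMap_mul hΩ hr hK (φ := fun y => ρ (y - w))
      (hρ.continuous.comp (by fun_prop)) (hs.comp_homeomorph (Homeomorph.subRight w))
  rw [← sub_eq_zero, ← integral_sub (hint w₀) (hint w₁),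
    ← setIntegral_fderiv_comp_lensMap_eq_zero hΩ hr hK hH hHs (w₁ - w₀)]
  simp only [hfderiv, sub_mul]

end DegreeIntegral

section Degree

/-- A source is regular if none of its images lies on the critical curve of the lens map. -/
def IsRegularSource (Ω : Set ℂ) (r : ℂ → ℂ) (w : ℂ) : Prop :=
  ∀ x ∈ fiber Ω r w, ‖deriv r x‖ ≠ 1

/-- The number of orientation-preserving images of a source minus the number of
orientation-reversing ones; meaningful if the source is regular. -/
noncomputable def degree (Ω : Set ℂ) (r : ℂ → ℂ) (w : ℂ) : ℤ :=
  {x ∈ fiber Ω r w | ‖deriv r x‖ < 1}.ncard - {x ∈ fiber Ω r w | 1 < ‖deriv r x‖}.ncard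

variable {Ω : Set ℂ} {r : ℂ → ℂ} {w : ℂ}

lemma sum_sign_eq_degree (hfin : (fiber Ω r w).Finite) :
    ∑ x ∈ hfin.toFinset, (SignType.sign (1 - ‖deriv r x‖ ^ 2) : ℝ) = degree Ω r w := by
  have hsign : ∀ x, (SignType.sign (1 - ‖deriv r x‖ ^ 2) : ℝ) =
      (if ‖deriv r x‖ < 1 then 1 else 0) - if 1 < ‖deriv r x‖ then 1 else 0 := fun x => by
    rcases lt_trichotomy ‖deriv r x‖ 1 with h | h | h
    · have hpos : 0 < 1 - ‖deriv r x‖ ^ 2 := by nlinarith [norm_nonneg (deriv r x)]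
      simp [sign_pos hpos, h, h.not_gt]
    · simp [h]
    · have hneg : 1 - ‖deriv r x‖ ^ 2 < 0 := by nlinarith
      simp [sign_neg hneg, h, h.not_gt]
  have hcard : ∀ p : ℂ → Prop, {x ∈ fiber Ω r w | p x}.ncard =
      (open Classical in (hfin.toFinset.filter p).card) := fun p => by
    classical
    rw [← ncard_coe_finset]
    simp
  simp only [hsign, Finset.sum_sub_distrib, Finset.sum_boole, degree, hcard]
  push_cast
  congr!

lemma exists_isOpen_injOn_lensMap (hΩ : IsOpen Ω) (hr : DifferentiableOn ℂ r Ω) {x : ℂ}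
    (hx : x ∈ Ω) (hd : ‖deriv r x‖ ≠ 1) {V : Set ℂ} (hV : V ∈ 𝓝 x) :
    ∃ U ⊆ Ω ∩ V, IsOpen U ∧ x ∈ U ∧ InjOn (lensMap r) U ∧ lensMap r '' U ∈ 𝓝 (lensMap r x) ∧
      ∀ y ∈ U, SignType.sign (1 - ‖deriv r y‖ ^ 2) = SignType.sign (1 - ‖deriv r x‖ ^ 2) := by
  have hJ : 1 - ‖deriv r x‖ ^ 2 ≠ 0 :=
    sub_ne_zero.2 fun h => hd ((pow_eq_one_iff_of_nonneg (norm_nonneg _) two_ne_zero).1 h.symm)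
  have hstrict : HasStrictFDerivAt (lensMap r) ((lensDeriv
      (deriv r x)).toContinuousLinearEquivOfDetNeZero (det_lensDeriv _ ▸ hJ) : ℂ →L[ℝ] ℂ) x :=
    hasStrictFDerivAt_lensMap (hasStrictDerivAt_of_differentiableOn hΩ hr hx)
  have hsign : ∀ᶠ y in 𝓝 x,
      SignType.sign (1 - ‖deriv r y‖ ^ 2) = SignType.sign (1 - ‖deriv r x‖ ^ 2) := by
    have hcont : ContinuousAt (fun y => 1 - ‖deriv r y‖ ^ 2) x :=
      continuousAt_const.sub (((hr.deriv hΩ).continuousOn.continuousAt (hΩ.mem_nhds hx)).norm.pow 2)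
    exact hcont.eventually ((continuousAt_sign_of_ne_zero hJ).eventually
      ((isOpen_discrete {_}).mem_nhds rfl))
  obtain ⟨U, hU, hUo, hxU⟩ := eventually_nhds_iff.1 <| (hΩ.eventually_mem hx).and <|
    (eventually_mem_set.2 hV).and <| hsign.and <|
      (hstrict.toOpenPartialHomeomorph _).open_source.eventually_mem
        hstrict.mem_toOpenPartialHomeomorph_source
  refine ⟨U, fun y hy => ⟨(hU y hy).1, (hU y hy).2.1⟩, hUo, hxU,
    (hstrict.toOpenPartialHomeomorph _).injOn.mono fun y hy => (hU y hy).2.2.2, ?_,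
    fun y hy => (hU y hy).2.2.1⟩
  rw [← hstrict.map_nhds_eq_of_equiv]
  exact image_mem_map (hUo.mem_nhds hxU)

lemma setIntegral_lensMap_eq_sign_mul (hΩ : IsOpen Ω) (hr : DifferentiableOn ℂ r Ω) {U : Set ℂ}
    (hUΩ : U ⊆ Ω) (hU : IsOpen U) (hinj : InjOn (lensMap r) U) {s : SignType}
    (hs : ∀ y ∈ U, SignType.sign (1 - ‖deriv r y‖ ^ 2) = s) {ρ : ℂ → ℝ}
    (hρ : Function.support ρ ⊆ lensMap r '' U) :
    ∫ x in U, ρ (lensMap r x) * (1 - ‖deriv r x‖ ^ 2) = s * ∫ y, ρ y := by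
  calc ∫ x in U, ρ (lensMap r x) * (1 - ‖deriv r x‖ ^ 2)
      = ∫ x in U, s * (|(lensDeriv (deriv r x)).det| • ρ (lensMap r x)) := by
        refine setIntegral_congr_fun hU.measurableSet fun x hx => ?_
        rw [det_lensDeriv, smul_eq_mul, ← mul_assoc, ← hs x hx, sign_mul_abs, mul_comm]
    _ = s * ∫ y in lensMap r '' U, ρ y := by
        rw [integral_const_mul, integral_image_eq_integral_abs_det_fderiv_smul volume
          hU.measurableSet (fun x hx => (hasStrictFDerivAt_lensMap
            (hasStrictDerivAt_of_differentiableOn hΩ hr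
              (hUΩ hx))).hasFDerivAt.hasFDerivWithinAt) hinj]
    _ = s * ∫ y, ρ y := by
        rw [setIntegral_eq_integral_of_forall_compl_eq_zero fun y hy =>
          Function.notMem_support.1 fun h => hy (hρ h)]

variable (hΩ : IsOpen Ω) (hr : DifferentiableOn ℂ r Ω)
  (hK : ∀ K, IsCompact K → IsCompact (Ω ∩ lensMap r ⁻¹' K))

include hK in
lemma eventually_fiber_subset (hr : ContinuousOn (lensMap r) Ω) {W : Set ℂ} (hW : IsOpen W)
    (hfW : fiber Ω r w ⊆ W) : ∀ᶠ y in 𝓝 w, fiber Ω r y ⊆ W := by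
  have hcompact : IsCompact (lensMap r '' ((Ω ∩ lensMap r ⁻¹' Metric.closedBall w 1) \ W)) :=
    ((hK _ (isCompact_closedBall w 1)).diff hW).image_of_continuousOn
      (hr.mono fun x hx => hx.1.1)
  have hw : w ∉ lensMap r '' ((Ω ∩ lensMap r ⁻¹' Metric.closedBall w 1) \ W) := by
    rintro ⟨x, hx, hxw⟩
    exact hx.2 (hfW ⟨hx.1.1, hxw⟩)
  filter_upwards [hcompact.isClosed.isOpen_compl.mem_nhds hw,
    Metric.closedBall_mem_nhds w one_pos] with y hy hyball x hx
  by_contra hxW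
  exact hy ⟨x, ⟨⟨hx.1, mem_preimage.2 (hx.2 ▸ hyball)⟩, hxW⟩, hx.2⟩

include hΩ hr hK

lemma finite_fiber_of_isRegularSource (hw : IsRegularSource Ω r w) : (fiber Ω r w).Finite := by
  refine (hK {w} isCompact_singleton).finite (isDiscrete_iff_nhdsNE.2 fun x hx => ?_)
  obtain ⟨U, -, hUo, hxU, hinj, -⟩ :=
    exists_isOpen_injOn_lensMap hΩ hr hx.1 (hw x hx) univ_mem
  rw [← disjoint_iff, disjoint_principal_right]
  filter_upwards [mem_nhdsWithin_of_mem_nhds (hUo.mem_nhds hxU), self_mem_nhdsWithin]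
    with y hyU hne hy
  exact hne (hinj hyU hxU (hy.2.trans hx.2.symm))

lemma exists_isOpen_family_of_isRegularSource (hfin : (fiber Ω r w).Finite)
    (hw : IsRegularSource Ω r w) :
    ∃ U : ℂ → Set ℂ, (fiber Ω r w).PairwiseDisjoint U ∧
      (∀ x ∈ fiber Ω r w, U x ⊆ Ω ∧ IsOpen (U x) ∧ InjOn (lensMap r) (U x) ∧
        ∀ y ∈ U x, SignType.sign (1 - ‖deriv r y‖ ^ 2) = SignType.sign (1 - ‖deriv r x‖ ^ 2)) ∧
      ∀ᶠ y in 𝓝 w, fiber Ω r y ⊆ ⋃ x ∈ fiber Ω r w, U x ∧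
        ∀ x ∈ fiber Ω r w, y ∈ lensMap r '' U x := by
  obtain ⟨V, hV, hVdisj⟩ := hfin.t2_separation
  choose! U hUV hUo hxU hinj himage hsign using fun x (hx : x ∈ fiber Ω r w) =>
    exists_isOpen_injOn_lensMap hΩ hr hx.1 (hw x hx) ((hV x).2.mem_nhds (hV x).1)
  refine ⟨U, fun x hx y hy hxy => (hVdisj hx hy hxy).mono
      ((hUV x hx).trans inter_subset_right) ((hUV y hy).trans inter_subset_right),
    fun x hx => ⟨(hUV x hx).trans inter_subset_left, hUo x hx, hinj x hx, hsign x hx⟩, ?_⟩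
  refine .and (eventually_fiber_subset hK (contDiffOn_lensMap hΩ hr).continuousOn
    (isOpen_biUnion hUo) fun x hx => mem_biUnion hx (hxU x hx)) ?_
  exact (eventually_all_finite hfin).2 fun x hx =>
    eventually_mem_set.2 (hx.2 ▸ himage x hx)

lemma exists_setIntegral_comp_lensMap_eq_degree_mul (hw : IsRegularSource Ω r w) :
    ∃ ε > 0, ∀ ρ : ℂ → ℝ, Continuous ρ → Function.support ρ ⊆ Metric.ball 0 ε →
      ∫ x in Ω, ρ (lensMap r x - w) * (1 - ‖deriv r x‖ ^ 2) =
        degree Ω r w * ∫ y, ρ y := by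
  have hfin := finite_fiber_of_isRegularSource hΩ hr hK hw
  obtain ⟨U, hdisj, hU, hnear⟩ := exists_isOpen_family_of_isRegularSource hΩ hr hK hfin hw
  obtain ⟨ε, hε, hball⟩ := Metric.eventually_nhds_iff.1 hnear
  refine ⟨ε, hε, fun ρ hρ hsupp => ?_⟩
  have hmem : ∀ y, ρ (y - w) ≠ 0 → dist y w < ε := fun y hy => by
    simpa [dist_eq_norm] using hsupp hy
  have hsub : ⋃ x ∈ fiber Ω r w, U x ⊆ Ω := iUnion₂_subset fun x hx => (hU x hx).1
  have hzero : ∀ x ∈ Ω \ ⋃ x ∈ fiber Ω r w, U x,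
      ρ (lensMap r x - w) * (1 - ‖deriv r x‖ ^ 2) = 0 := fun x hx => by
    refine mul_eq_zero_of_left (by_contra fun hne => hx.2 ?_) _
    exact (hball (hmem _ hne)).1 ⟨hx.1, rfl⟩
  have hint : IntegrableOn (fun x => ρ (lensMap r x - w) * (1 - ‖deriv r x‖ ^ 2)) Ω :=
    integrableOn_comp_lensMap_mul hΩ hr hK (φ := fun y => ρ (y - w)) (by fun_prop) <|
      HasCompactSupport.intro (isCompact_closedBall w ε) fun y hy =>
        by_contra fun hne => hy (hmem y hne).le
  rw [setIntegral_eq_of_subset_of_forall_sdiff_eq_zero hΩ.measurableSet hsub hzero,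
    ← sum_sign_eq_degree hfin, Finset.sum_mul]
  have hcongr : ∀ x ∈ hfin.toFinset, ∫ x in U x, ρ (lensMap r x - w) * (1 - ‖deriv r x‖ ^ 2) =
      SignType.sign (1 - ‖deriv r x‖ ^ 2) * ∫ y, ρ y := fun x hx => by
    obtain ⟨hUΩ, hUo, hinj, hsign⟩ := hU x (hfin.mem_toFinset.1 hx)
    rw [setIntegral_lensMap_eq_sign_mul (ρ := fun y => ρ (y - w)) hΩ hr hUΩ hUo hinj hsign
      fun y hy => (hball (hmem y hy)).2 x (hfin.mem_toFinset.1 hx),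
      integral_sub_right_eq_self]
  have hunion := integral_biUnion_finset hfin.toFinset
    (fun x hx => (hU x (hfin.mem_toFinset.1 hx)).2.1.measurableSet)
    (by rwa [hfin.coe_toFinset])
    fun x hx => hint.mono_set (hU x (hfin.mem_toFinset.1 hx)).1
  simp only [hfin.mem_toFinset] at hunion
  rw [hunion, Finset.sum_congr rfl hcongr]

lemma degree_eq_degree {w' : ℂ} (hw : IsRegularSource Ω r w) (hw' : IsRegularSource Ω r w') :
    degree Ω r w = degree Ω r w' := by
  obtain ⟨ε, hε, h⟩ := exists_setIntegral_comp_lensMap_eq_degree_mul hΩ hr hK hw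
  obtain ⟨ε', hε', h'⟩ := exists_setIntegral_comp_lensMap_eq_degree_mul hΩ hr hK hw'
  have hmin : 0 < min ε ε' := lt_min hε hε'
  let b : ContDiffBump (0 : ℂ) := ⟨min ε ε' / 2, min ε ε', half_pos hmin, half_lt_self hmin⟩
  have hint := setIntegral_comp_lensMap_sub_eq hΩ hr hK b.contDiff b.hasCompactSupport w w'
  rw [h b b.continuous (b.support_eq.trans_subset (Metric.ball_subset_ball (min_le_left _ _))),
    h' b b.continuous (b.support_eq.trans_subset (Metric.ball_subset_ball (min_le_right _ _)))]
    at hint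
  exact_mod_cast mul_right_cancel₀ (b.integral_pos (μ := volume)).ne' hint

end Degree

section Properness

open Bornology

lemma tendsto_add_cobounded {α E : Type*} [NormedAddCommGroup E] {l : Filter α} {f g : α → E}
    {c : E} (hf : Tendsto f l (cobounded E)) (hg : Tendsto g l (𝓝 c)) :
    Tendsto (fun x => f x + g x) l (cobounded E) := by
  rw [← tendsto_norm_atTop_iff_cobounded] at hf ⊢
  refine tendsto_atTop_mono (fun x => ?_) (hf.atTop_add hg.norm.neg)
  simpa [sub_eq_add_neg] using norm_sub_norm_le (f x) (-g x)

lemma isCompact_inter_preimage {X Y : Type*} [PseudoMetricSpace X] [ProperSpace X]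
    [MetricSpace Y] {Ω : Set X} {f : X → Y} (hf : ContinuousOn f Ω)
    (hboundary : ∀ p ∉ Ω, Tendsto f (𝓝[Ω] p) (cobounded Y))
    (hinfty : Tendsto f (cobounded X) (cobounded Y)) {K : Set Y} (hK : IsCompact K) :
    IsCompact (Ω ∩ f ⁻¹' K) := by
  have hcobdd : Kᶜ ∈ cobounded Y := isCobounded_compl_iff.2 hK.isBounded
  refine Metric.isCompact_of_isClosed_isBounded (isClosed_of_closure_subset fun p hp => ?_) ?_
  · have hpΩ : p ∈ Ω := by
      by_contra hpΩ
      have hne : (𝓝[Ω ∩ f ⁻¹' K] p).NeBot := mem_closure_iff_nhdsWithin_neBot.1 hp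
      have hnotMem : ∀ᶠ x in 𝓝[Ω ∩ f ⁻¹' K] p, f x ∈ Kᶜ :=
        ((hboundary p hpΩ).mono_left (nhdsWithin_mono p inter_subset_left)).eventually_mem hcobdd
      obtain ⟨x, hx, hxK⟩ := (hnotMem.and self_mem_nhdsWithin).exists
      exact hx hxK.2
    exact ⟨hpΩ, hK.isClosed.closure_subset (((hf p hpΩ).mono inter_subset_left).mem_closure hp
      fun x hx => hx.2)⟩
  · rw [← isCobounded_compl_iff]
    filter_upwards [hinfty.eventually_mem hcobdd] with x hx hxK
    exact hx hxK.2

lemma tendsto_lensMap_cobounded {r : ℂ → ℂ} (hr : Tendsto r (cobounded ℂ) (𝓝 0)) :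
    Tendsto (lensMap r) (cobounded ℂ) (cobounded ℂ) := by
  have hconj := (continuous_conj.tendsto 0).comp hr
  exact (tendsto_add_cobounded tendsto_id hconj.neg).congr fun x => (sub_eq_add_neg _ _).symm

lemma tendsto_conj_cobounded : Tendsto (fun x : ℂ => conj x) (cobounded ℂ) (cobounded ℂ) := by
  rw [← tendsto_norm_atTop_iff_cobounded]
  simpa only [RCLike.norm_conj] using tendsto_norm_cobounded_atTop

lemma tendsto_lensMap_cobounded_of_tendsto {r : ℂ → ℂ} {p : ℂ} {s : Set ℂ}
    (hr : Tendsto r (𝓝[s] p) (cobounded ℂ)) :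
    Tendsto (lensMap r) (𝓝[s] p) (cobounded ℂ) := by
  have hneg : Tendsto (fun x => -conj (r x)) (𝓝[s] p) (cobounded ℂ) :=
    tendsto_neg_cobounded.comp (tendsto_conj_cobounded.comp hr)
  exact (tendsto_add_cobounded hneg (tendsto_id'.2 nhdsWithin_le_nhds)).congr fun x =>
    neg_add_eq_sub _ _

end Properness

section SimplePole

open Bornology

variable {c p : ℂ} {r g : ℂ → ℂ}

lemma tendsto_cobounded_of_eq_div_add (hc : c ≠ 0) (hr : ∀ x, r x = c / (x - p) + g x)
    (hg : ContinuousAt g p) : Tendsto r (𝓝[≠] p) (cobounded ℂ) := by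
  have hsub : Tendsto (fun x => x - p) (𝓝[≠] p) (𝓝[≠] 0) := by
    refine tendsto_nhdsWithin_iff.2 ⟨?_, ?_⟩
    · exact (tendsto_sub_nhds_zero_iff.2 tendsto_id).mono_left nhdsWithin_le_nhds
    · filter_upwards [self_mem_nhdsWithin] with x hx using sub_ne_zero.2 hx
  have hpole : Tendsto (fun x => c / (x - p)) (𝓝[≠] p) (cobounded ℂ) := by
    simp only [div_eq_mul_inv]
    exact (tendsto_mul_left_cobounded hc).comp (tendsto_inv₀_nhdsNE_zero.comp hsub)
  exact (tendsto_add_cobounded hpole (hg.mono_left nhdsWithin_le_nhds)).congr fun x => (hr x).symm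

lemma exists_forall_mul_norm_sub_le (hc : c ≠ 0) (hr : ∀ x, r x = c / (x - p) + g x) {g' : ℂ}
    (hg : HasStrictDerivAt g g' p) {M : ℝ} (hM : 0 < M) :
    ∃ V, IsOpen V ∧ p ∈ V ∧ ∀ x ∈ V, x ≠ p → ∀ y ∈ V, y ≠ p → M * ‖x - y‖ ≤ ‖r x - r y‖ := by
  obtain ⟨C, s, hs, hlip⟩ := hg.hasStrictFDerivAt.exists_lipschitzOnWith
  have hCM : 0 < C + M := by positivity
  have hnear : ∀ᶠ x in 𝓝 p, (C + M) * ‖x - p‖ ^ 2 < ‖c‖ := by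
    have hcont : ContinuousAt (fun x => (C + M) * ‖x - p‖ ^ 2) p := by fun_prop
    exact hcont.eventually_lt_const (by simpa using hc)
  obtain ⟨V, hV, hVo, hpV⟩ := eventually_nhds_iff.1 ((eventually_mem_set.2 hs).and hnear)
  refine ⟨V, hVo, hpV, fun x hx hxp y hy hyp => ?_⟩
  have hx0 := sub_ne_zero.2 hxp
  have hy0 := sub_ne_zero.2 hyp
  have hprod : (C + M) * (‖x - p‖ * ‖y - p‖) ≤ ‖c‖ := by
    nlinarith [(hV x hx).2, (hV y hy).2, mul_nonneg hCM.le (sq_nonneg (‖x - p‖ - ‖y - p‖))]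
  have hpole : (C + M) * ‖x - y‖ ≤ ‖c / (x - p) - c / (y - p)‖ := by
    have heq : c / (x - p) - c / (y - p) = -(c * (x - y) / ((x - p) * (y - p))) := by
      field_simp
      ring
    rw [heq, norm_neg, norm_div, norm_mul, norm_mul, le_div_iff₀ (by positivity)]
    nlinarith [norm_nonneg (x - y)]
  have hreg : ‖g x - g y‖ ≤ C * ‖x - y‖ := by
    simpa [dist_eq_norm] using hlip.dist_le_mul x (hV x hx).1 y (hV y hy).1
  calc M * ‖x - y‖ ≤ ‖c / (x - p) - c / (y - p)‖ - ‖g x - g y‖ := by linarith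
    _ ≤ ‖r x - r y‖ := by
      rw [hr, hr, add_sub_add_comm]
      exact norm_sub_le_norm_add _ _

lemma le_norm_of_hasDerivAt {M : ℝ} {x a : ℂ} (h : HasDerivAt r a x)
    (hM : ∀ᶠ y in 𝓝 x, M * ‖y - x‖ ≤ ‖r y - r x‖) : M ≤ ‖a‖ := by
  refine ge_of_tendsto (hasDerivAt_iff_tendsto_slope.1 h).norm ?_
  filter_upwards [nhdsWithin_le_nhds hM, self_mem_nhdsWithin] with y hy hyx
  rwa [slope_def_field, norm_div, le_div_iff₀ (norm_pos_iff.2 (sub_ne_zero.2 hyx))]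

lemma injOn_lensMap_of_forall_mul_norm_sub_le {V : Set ℂ} {M : ℝ} (hM : 1 < M)
    (h : ∀ x ∈ V, ∀ y ∈ V, M * ‖x - y‖ ≤ ‖r x - r y‖) : InjOn (lensMap r) V := by
  intro x hx y hy hxy
  have heq : ‖x - y‖ = ‖r x - r y‖ := by
    rw [← RCLike.norm_conj (r x - r y), map_sub]
    exact congrArg norm (sub_eq_sub_iff_sub_eq_sub.1 hxy)
  by_contra hne
  nlinarith [h x hx y hy, norm_pos_iff.2 (sub_ne_zero.2 hne)]

end SimplePole

section FarSource

lemma exists_lensMap_eq_of_norm_le {r : ℂ → ℂ} {w : ℂ}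
    (hr : ∀ x ∈ Metric.closedBall w 1, DifferentiableAt ℂ r x)
    (hr₀ : ∀ x ∈ Metric.closedBall w 1, ‖r x‖ ≤ 1)
    (hr₁ : ∀ x ∈ Metric.closedBall w 1, ‖deriv r x‖ ≤ 1 / 2) :
    ∃ x ∈ Metric.closedBall w 1, lensMap r x = w := by
  have hmaps : MapsTo (fun x => w + conj (r x)) (Metric.closedBall w 1)
      (Metric.closedBall w 1) := fun x hx => by
    simpa [dist_eq_norm] using hr₀ x hx
  have hlip : LipschitzOnWith (1 / 2) (fun x => w + conj (r x)) (Metric.closedBall w 1) :=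
    LipschitzOnWith.of_dist_le_mul fun x hx y hy => by
      rw [dist_add_left, dist_conj_conj, dist_eq_norm, dist_eq_norm, NNReal.coe_div]
      exact (convex_closedBall w 1).norm_image_sub_le_of_norm_deriv_le hr
        (by simpa using hr₁) hy hx
  obtain ⟨x, hx, hfix, -⟩ := ContractingWith.exists_fixedPoint' (K := 1 / 2)
    Metric.isClosed_closedBall.isComplete hmaps ⟨by norm_num, hlip.mapsToRestrict hmaps⟩
    (Metric.mem_closedBall_self zero_le_one) (edist_ne_top _ _)
  exact ⟨x, hx, (eq_sub_of_add_eq hfix).symm⟩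

end FarSource

section DegreeBound

open Bornology

lemma eventually_forall_closedBall {p : ℂ → Prop} (hp : ∀ᶠ x in cobounded ℂ, p x) (s : ℝ) :
    ∀ᶠ w in cobounded ℂ, ∀ x ∈ Metric.closedBall w s, p x := by
  obtain ⟨R, -, hR⟩ := hasBasis_cobounded_norm.eventually_iff.1 hp
  filter_upwards [eventually_cobounded_le_norm (R + s)] with w hw x hx
  have htri := norm_sub_norm_le w x
  rw [← dist_eq_norm, dist_comm] at htri
  exact hR (by rw [mem_ofPred_eq]; linarith [Metric.mem_closedBall.1 hx])

lemma eventually_forall_mem_fiber {Ω V : Set ℂ} {r : ℂ → ℂ} (hr : ContinuousOn (lensMap r) Ω)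
    (hV : IsOpen V) (hΩV : Ωᶜ ⊆ V) {p : ℂ → Prop} (hp : ∀ᶠ x in cobounded ℂ, p x) :
    ∀ᶠ w in cobounded ℂ, ∀ x ∈ fiber Ω r w, p x ∨ x ∈ V := by
  have hbdd : IsBounded {x | ¬p x} := isBounded_def.2 (mem_of_superset hp fun _ => not_not.2)
  have himage : IsCompact (lensMap r '' (closure {x | ¬p x} \ V)) :=
    (hbdd.isCompact_closure.diff hV).image_of_continuousOn <|
      hr.mono fun x hx => by_contra fun h => hx.2 (hΩV h)
  filter_upwards [himage.isBounded] with w hw x hx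
  by_contra! hcon
  exact hw ⟨x, ⟨subset_closure hcon.1, hcon.2⟩, hx.2⟩

lemma eventually_notMem_range {ι : Type*} [Finite ι] {z : ι → ℂ} :
    ∀ᶠ x in cobounded ℂ, x ∉ range z :=
  (finite_range z).isBounded

variable {ι : Type*} [Fintype ι] {z : ι → ℂ} {σ : ι → ℂ}

lemma tendsto_deflection_cobounded : Tendsto (deflection z σ) (cobounded ℂ) (𝓝 0) := by
  have hterm : ∀ j, Tendsto (fun x : ℂ => σ j / (x - z j)) (cobounded ℂ) (𝓝 0) := fun j => by
    simpa [div_eq_mul_inv, Function.comp_def] using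
      (tendsto_inv₀_cobounded.comp (tendsto_sub_const_cobounded (z j))).const_mul (σ j)
  rw [← Finset.sum_const_zero (s := (Finset.univ : Finset ι))]
  exact tendsto_finsetSum _ fun j _ => hterm j

lemma eventually_norm_deflection_le {c : ℝ} (hc : 0 < c) :
    ∀ᶠ x in cobounded ℂ, ‖deflection z σ x‖ ≤ c := by
  have hlim := (tendsto_deflection_cobounded (z := z) (σ := σ)).norm
  rw [norm_zero] at hlim
  exact hlim.eventually_le_const hc

lemma eventually_norm_deriv_deflection_le {c : ℝ} (hc : 0 < c) :
    ∀ᶠ x in cobounded ℂ, ‖deriv (deflection z σ) x‖ ≤ c := by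
  filter_upwards [eventually_forall_closedBall (eventually_notMem_range (z := z)) 1,
    eventually_forall_closedBall (eventually_norm_deflection_le (z := z) (σ := σ) hc) 1]
    with x hx hxc
  have hdiff := (differentiableOn_deflection (z := z) (σ := σ)).mono fun y hy => hx y hy
  rw [← div_one c]
  exact norm_deriv_le_of_forall_mem_sphere_norm_le one_pos (hdiff.diffContOnCl_ball subset_rfl)
    fun y hy => hxc y (Metric.sphere_subset_closedBall hy)

lemma eventually_exists_mem_fiber : ∀ᶠ w in cobounded ℂ,
    ∃ x ∈ fiber (range z)ᶜ (deflection z σ) w, ‖deriv (deflection z σ) x‖ < 1 := by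
  filter_upwards [eventually_forall_closedBall (eventually_notMem_range (z := z)) 1,
    eventually_forall_closedBall (eventually_norm_deflection_le (z := z) (σ := σ) one_pos) 1,
    eventually_forall_closedBall
      (eventually_norm_deriv_deflection_le (z := z) (σ := σ) one_half_pos) 1]
    with w hw hr hr'
  obtain ⟨x, hx, hxw⟩ := exists_lensMap_eq_of_norm_le
    (fun x hx => differentiableOn_deflection.differentiableAt
      (isOpen_compl_range.mem_nhds (hw x hx))) hr hr'
  exact ⟨x, ⟨hw x hx, hxw⟩, (hr' x hx).trans_lt one_half_lt_one⟩

variable (hz : Function.Injective z)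

include hz

lemma exists_deflection_eq_div_add (j : ι) : ∃ (g : ℂ → ℂ) (g' : ℂ),
    HasStrictDerivAt g g' (z j) ∧ ∀ x, deflection z σ x = σ j / (x - z j) + g x := by
  classical
  have hj : z j ∉ range fun i : {i // i ≠ j} => z i := by
    rintro ⟨i, hi⟩
    exact i.2 (hz hi)
  exact ⟨_, _, hasStrictDerivAt_deflection (σ := fun i : {i // i ≠ j} => σ i) hj,
    fun x => Fintype.sum_eq_add_sum_subtype_ne _ j⟩

variable (hσ : ∀ j, σ j ≠ 0)

include hσ

lemma isCompact_inter_preimage_lensMap_deflection {K : Set ℂ} (hK : IsCompact K) :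
    IsCompact ((range z)ᶜ ∩ lensMap (deflection z σ) ⁻¹' K) := by
  refine isCompact_inter_preimage (contDiffOn_lensMap isOpen_compl_range
    differentiableOn_deflection).continuousOn (fun p hp => ?_)
    (tendsto_lensMap_cobounded tendsto_deflection_cobounded) hK
  obtain ⟨j, rfl⟩ := notMem_compl_iff.1 hp
  obtain ⟨g, g', hg, hr⟩ := exists_deflection_eq_div_add (σ := σ) hz j
  exact tendsto_lensMap_cobounded_of_tendsto <|
    (tendsto_cobounded_of_eq_div_add (hσ j) hr hg.hasDerivAt.continuousAt).mono_left
      (nhdsWithin_mono _ (compl_subset_compl.2 (singleton_subset_iff.2 (mem_range_self j))))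

lemma exists_isOpen_injOn_lensMap_deflection (j : ι) : ∃ V, IsOpen V ∧ z j ∈ V ∧
    InjOn (lensMap (deflection z σ)) (V \ range z) ∧
    ∀ x ∈ V \ range z, 1 < ‖deriv (deflection z σ) x‖ := by
  obtain ⟨g, g', hg, hr⟩ := exists_deflection_eq_div_add (σ := σ) hz j
  obtain ⟨V, hVo, hjV, hexp⟩ := exists_forall_mul_norm_sub_le (hσ j) hr hg two_pos
  have hne : ∀ x ∈ V \ range z, x ≠ z j := fun x hx h => hx.2 (h ▸ mem_range_self j)
  refine ⟨V, hVo, hjV, injOn_lensMap_of_forall_mul_norm_sub_le one_lt_two fun x hx y hy =>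
    hexp x hx.1 (hne x hx) y hy.1 (hne y hy), fun x hx => one_lt_two.trans_le ?_⟩
  refine le_norm_of_hasDerivAt (hasStrictDerivAt_of_differentiableOn isOpen_compl_range
    differentiableOn_deflection hx.2).hasDerivAt ?_
  filter_upwards [(hVo.inter isOpen_compl_range).mem_nhds hx] with y hy
  exact hexp y hy.1 (hne y hy) x hx.1 (hne x hx)

lemma one_sub_card_le_degree {w : ℂ}
    (hw : IsRegularSource (range z)ᶜ (deflection z σ) w) :
    1 - (Fintype.card ι : ℤ) ≤ degree (range z)ᶜ (deflection z σ) w := by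
  choose V hVo hV hinj hrep using exists_isOpen_injOn_lensMap_deflection hz hσ
  have hrange : (range z)ᶜᶜ ⊆ ⋃ j, V j := by
    rw [compl_compl]
    exact range_subset_iff.2 fun j => mem_iUnion_of_mem j (hV j)
  have hdiff := differentiableOn_deflection (z := z) (σ := σ)
  obtain ⟨w', hdich, x, hx, hxd⟩ := ((eventually_forall_mem_fiber
    (contDiffOn_lensMap isOpen_compl_range hdiff).continuousOn (isOpen_iUnion hVo) hrange
    (eventually_norm_deriv_deflection_le (z := z) (σ := σ) one_half_pos)).and
    (eventually_exists_mem_fiber (z := z) (σ := σ))).exists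
  replace hdich : ∀ x ∈ fiber (range z)ᶜ (deflection z σ) w',
      ‖deriv (deflection z σ) x‖ < 1 ∨ ∃ j, x ∈ V j := fun x hx =>
    (hdich x hx).imp (fun h => h.trans_lt one_half_lt_one) mem_iUnion.1
  have hw' : IsRegularSource (range z)ᶜ (deflection z σ) w' := fun x hx =>
    (hdich x hx).elim ne_of_lt fun ⟨j, hj⟩ => (hrep j x ⟨hj, hx.1⟩).ne'
  have hK := fun K => isCompact_inter_preimage_lensMap_deflection (K := K) hz hσ
  rw [degree_eq_degree isOpen_compl_range hdiff hK hw hw']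
  have hattr : 0 < {x ∈ fiber (range z)ᶜ (deflection z σ) w' |
      ‖deriv (deflection z σ) x‖ < 1}.ncard :=
    (ncard_pos ((finite_fiber_of_isRegularSource isOpen_compl_range hdiff hK hw').subset
      (sep_subset _ _))).2 ⟨x, hx, hxd⟩
  have hrepel : {x ∈ fiber (range z)ᶜ (deflection z σ) w' |
      1 < ‖deriv (deflection z σ) x‖}.ncard ≤ Fintype.card ι := by
    choose j hj using fun x : {x ∈ fiber (range z)ᶜ (deflection z σ) w' |
      1 < ‖deriv (deflection z σ) x‖} => (hdich x x.2.1).resolve_left x.2.2.not_gt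
    rw [← Nat.card_coe_set_eq, ← Nat.card_eq_fintype_card]
    refine Nat.card_le_card_of_injective j fun x y hxy => Subtype.ext ?_
    exact hinj (j x) ⟨hj x, x.2.1.1⟩ ⟨hxy ▸ hj y, y.2.1.1⟩ (x.2.1.2.trans y.2.1.2.symm)
  rw [degree]
  lia

end DegreeBound

section Direction

open Module

lemma two_mul_ncard_le {α β : Type*} {F : Set α} {S : Set β} (hF : F.Finite) (hS : S.Finite)
    {V : α → Set β} (hV : F.PairwiseDisjoint V) (h : ∀ a ∈ F, (S ∩ V a).Nontrivial) :
    2 * F.ncard ≤ S.ncard := by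
  classical
  rw [ncard_eq_toFinset_card F hF, ncard_eq_toFinset_card S hS, mul_comm 2,
    ← mul_one hS.toFinset.card]
  refine Finset.card_nsmul_le_card_nsmul (R := ℕ) (fun a b => b ∈ V a)
    (fun a ha => ?_) fun b _ => ?_
  · refine Nat.succ_le_iff.2 ?_
    rw [Nat.cast_id, Finset.one_lt_card_iff_nontrivial, Finset.Nontrivial]
    simpa [Finset.bipartiteAbove] using h a (hF.mem_toFinset.1 ha)
  · refine Finset.card_le_one.2 fun a ha a' ha' => ?_
    simp only [Finset.mem_bipartiteBelow, Finite.mem_toFinset] at ha ha'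
    exact hV.elim_set ha.1 ha'.1 b ha.2 ha'.2

lemma frequently_of_ae_volumeIoiPow {d : ℕ} {p : ℝ → Prop}
    (hp : ∀ᵐ t : Ioi (0 : ℝ) ∂Measure.volumeIoiPow d, p t) : ∃ᶠ t in 𝓝[>] 0, p t := by
  rw [(nhdsGT_basis (0 : ℝ)).frequently_iff]
  intro a ha
  have hpos : Measure.volumeIoiPow d (Iio ⟨a, ha⟩) ≠ 0 := by
    rw [Measure.volumeIoiPow_apply_Iio, Ne, ENNReal.ofReal_eq_zero, not_le]
    positivity
  obtain ⟨t, hta, hpt⟩ := ((frequently_ae_mem_iff.2 hpos).and_eventually hp).exists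
  exact ⟨t, ⟨t.2, hta⟩, hpt⟩

variable {E : Type*} [NormedAddCommGroup E] [NormedSpace ℝ E] [FiniteDimensional ℝ E]
  [MeasurableSpace E] [BorelSpace E] {N : Set E} (μ : Measure E) [μ.IsAddHaarMeasure]

include μ

lemma ae_toSphere_frequently_notMem (hN : μ N = 0) :
    ∀ᵐ u : Metric.sphere (0 : E) 1 ∂μ.toSphere, ∃ᶠ t : ℝ in 𝓝[>] 0, t • (u : E) ∉ N := by
  have hcoe : MeasurableEmbedding ((↑) : ({0}ᶜ : Set E) → E) :=
    .subtype_coe (measurableSet_singleton 0).compl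
  have hcomap : ∀ᵐ x : ({0}ᶜ : Set E) ∂μ.comap (↑), (x : E) ∉ N := hcoe.ae_map_iff.1 <| by
    rw [hcoe.map_comap]
    exact ae_restrict_of_ae (measure_eq_zero_iff_ae_notMem.1 hN)
  have hprod := (μ.measurePreserving_homeomorphUnitSphereProd).symm
    (homeomorphUnitSphereProd E).toMeasurableEquiv |>.quasiMeasurePreserving.ae hcomap
  filter_upwards [Measure.ae_ae_of_ae_prod hprod] with u hu
  refine frequently_of_ae_volumeIoiPow (hu.mono fun t ht => ?_)
  rwa [← homeomorphUnitSphereProd_symm_apply_coe E (u, t)]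

lemma exists_norm_eq_one_frequently_notMem (hE : 1 < Module.rank ℝ E) {B : Set E} (hB : B.Finite)
    (hN : μ N = 0) : ∃ u, ‖u‖ = 1 ∧ u ∉ B ∧ ∃ᶠ t : ℝ in 𝓝[>] 0, t • u ∉ N := by
  have hfin : {u : Metric.sphere (0 : E) 1 | (u : E) ∈ B}.Finite :=
    hB.preimage Subtype.val_injective.injOn
  have hinf : (Metric.sphere (0 : E) 1).Infinite :=
    (isPreconnected_sphere hE 0 1).infinite_of_nontrivial <| by
      have : Nontrivial E := rank_pos_iff_nontrivial.1 (zero_lt_one.trans hE)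
      obtain ⟨u, hu⟩ := exists_norm_eq E zero_le_one
      have hmem : u ∈ Metric.sphere 0 1 := mem_sphere_zero_iff_norm.2 hu
      exact ⟨u, hmem, -u, by simpa using hu,
        fun h => ne_neg_of_mem_unit_sphere ℝ ⟨u, hmem⟩ (Subtype.ext h)⟩
  have : Infinite (Metric.sphere (0 : E) 1) := hinf.to_subtype
  obtain ⟨u, hu, huB⟩ := (Measure.dense_of_ae (ae_toSphere_frequently_notMem μ hN)).exists_mem_open
    hfin.isClosed.isOpen_compl hfin.infinite_compl.nonempty
  exact ⟨u, norm_eq_of_mem_sphere u, huB, hu⟩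

end Direction

section Perturbation

lemma eventually_exists_pos_eq {g : ℝ → ℝ} {p : ℝ → Prop} (hg₀ : g 0 = 0)
    (hg : ∀ᶠ s in 𝓝 0, ContinuousAt g s) (hpos : ∀ᶠ s in 𝓝[>] 0, 0 < g s)
    (hp : ∀ᶠ s in 𝓝[>] 0, p s) : ∀ᶠ t in 𝓝[>] 0, ∃ s, 0 < s ∧ p s ∧ g s = t := by
  obtain ⟨η, hη, hsub⟩ := mem_nhdsGT_iff_exists_Ioc_subset.1
    ((hg.filter_mono nhdsWithin_le_nhds).and (hpos.and hp))
  have hcont : ContinuousOn g (Icc 0 η) := fun s hs => by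
    rcases hs.1.eq_or_lt with rfl | hs₀
    · exact hg.self_of_nhds.continuousWithinAt
    · exact (hsub ⟨hs₀, hs.2⟩).1.continuousWithinAt
  filter_upwards [Ioo_mem_nhdsGT (hsub ⟨hη, le_rfl⟩).2.1] with t ht
  rw [← hg₀] at ht
  obtain ⟨s, hs, hst⟩ := intermediate_value_Ioo (le_of_lt hη) hcont ht
  exact ⟨s, hs.1, (hsub ⟨hs.1, hs.2.le⟩).2.2, hst⟩

lemma eq_or_eq_neg_norm_mul {u d : ℂ} (hu : ‖u‖ = 1) (hd : (conj u * d).im = 0) :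
    d = ‖d‖ * u ∨ d = -(‖d‖ * u) := by
  have hreal : ((conj u * d).re : ℂ) = conj u * d := Complex.ext rfl hd.symm
  have hdu : d = (conj u * d).re * u := by
    rw [hreal, mul_right_comm, conj_mul', hu]
    simp
  have hnorm : |(conj u * d).re| = ‖d‖ := by
    rw [← Real.norm_eq_abs, ← norm_real, hreal, norm_mul, RCLike.norm_conj, hu, one_mul]
  rw [← hnorm]
  rcases abs_choice (conj u * d).re with h | h <;> rw [h]
  · exact .inl hdu
  · exact .inr (by rwa [ofReal_neg, neg_mul, neg_neg])

variable {Ω : Set ℂ} {r : ℂ → ℂ} {ζ u : ℂ}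

-- The derivative of `Ψ` is multiplication by `b`, so `Ψ` is locally invertible even at points where
-- the lens map folds.
lemma exists_curve_lensMap_im_eq_zero (hr : HasStrictDerivAt r (deriv r ζ) ζ)
    (hb : conj u + u * deriv r ζ ≠ 0) :
    ∃ γ : ℝ → ℂ, γ 0 = ζ ∧ ∀ᶠ s in 𝓝 0, ContinuousAt γ s ∧
      ((conj u + u * deriv r ζ) * (γ s - ζ)).re = s ∧
      (conj u * (lensMap r (γ s) - lensMap r ζ)).im = 0 := by
  set b := conj u + u * deriv r ζ with hbdef
  set Ψ : ℂ → ℂ := fun x =>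
    (b * (x - ζ)).re + (conj u * (lensMap r x - lensMap r ζ)).im * I with hΨ
  let b' : ℂ ≃L[ℝ] ℂ := ContinuousLinearEquiv.smulLeft (Units.mk0 b hb)
  have hΨ' : HasStrictFDerivAt Ψ (b' : ℂ →L[ℝ] ℂ) ζ := by
    have hre := ofRealCLM.hasStrictFDerivAt.comp ζ (reCLM.hasStrictFDerivAt.comp ζ
      (((hasStrictFDerivAt_id (𝕜 := ℝ) ζ).sub_const ζ).const_mul b))
    have him := ofRealCLM.hasStrictFDerivAt.comp ζ (imCLM.hasStrictFDerivAt.comp ζ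
      (((hasStrictFDerivAt_lensMap hr).sub_const (lensMap r ζ)).const_mul (conj u)))
    refine (hre.add (him.mul_const I)).congr_fderiv (ContinuousLinearMap.ext fun e => ?_)
    have himeq : (conj u * lensDeriv (deriv r ζ) e).im = (b * e).im := by
      simp only [hbdef, lensDeriv_apply, mul_im, add_re, add_im, sub_re, sub_im, conj_re, conj_im,
        mul_re]
      ring
    change ((b * e).re : ℂ) + I * (conj u * lensDeriv (deriv r ζ) e).im = b * e
    rw [himeq, mul_comm I, re_add_im]
  let P := hΨ'.toOpenPartialHomeomorph Ψ
  have hζ : ζ ∈ P.source := hΨ'.mem_toOpenPartialHomeomorph_source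
  have hΨζ : P ζ = 0 := show Ψ ζ = 0 by simp [hΨ]
  have hP₀ : (0 : ℂ) ∈ P.target := hΨζ ▸ P.map_source hζ
  refine ⟨fun s => P.symm s, by simpa [hΨζ] using P.left_inv hζ, ?_⟩
  have htarget : ∀ᶠ s : ℝ in 𝓝 0, (s : ℂ) ∈ P.target :=
    continuous_ofReal.continuousAt.eventually_mem (P.open_target.mem_nhds hP₀)
  filter_upwards [htarget] with s hs
  have hright : Ψ (P.symm s) = s := P.right_inv hs
  exact ⟨(P.continuousAt_symm hs).comp continuous_ofReal.continuousAt,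
    by simpa [hΨ] using congrArg re hright, by simpa [hΨ] using congrArg im hright⟩

lemma eventually_exists_re_pos {V : Set ℂ} (hr : HasStrictDerivAt r (deriv r ζ) ζ) (hu : ‖u‖ = 1)
    (hb : conj u + u * deriv r ζ ≠ 0) (hrc : ∀ᶠ x in 𝓝 ζ, ContinuousAt r x)
    (hisol : ∀ᶠ x in 𝓝[≠] ζ, lensMap r x ≠ lensMap r ζ) (hV : V ∈ 𝓝 ζ) :
    ∀ᶠ t : ℝ in 𝓝[>] 0, ∃ x ∈ V, 0 < ((conj u + u * deriv r ζ) * (x - ζ)).re ∧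
      (lensMap r x = lensMap r ζ + t * u ∨ lensMap r x = lensMap r ζ - t * u) := by
  obtain ⟨γ, hγ₀, hγ⟩ := exists_curve_lensMap_im_eq_zero hr hb
  have hγζ : Tendsto γ (𝓝 0) (𝓝 ζ) := by simpa only [hγ₀] using hγ.self_of_nhds.1.tendsto
  have hdist : ∀ᶠ s in 𝓝 0, ContinuousAt (fun s => ‖lensMap r (γ s) - lensMap r ζ‖) s := by
    filter_upwards [hγ, hγζ.eventually hrc] with s hs hrs
    exact ((hs.1.sub (continuous_conj.continuousAt.comp (hrs.comp hs.1))).sub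
      continuousAt_const).norm
  have hpos : ∀ᶠ s in 𝓝[>] 0, 0 < ‖lensMap r (γ s) - lensMap r ζ‖ := by
    filter_upwards [nhdsWithin_le_nhds hγ, self_mem_nhdsWithin,
      nhdsWithin_le_nhds (hγζ.eventually (eventually_nhdsWithin_iff.1 hisol))] with s hs hs₀ hne
    refine norm_pos_iff.2 (sub_ne_zero.2 (hne fun h => (mem_Ioi.1 hs₀).ne ?_))
    simpa [mem_singleton_iff.1 h] using hs.2.1
  have hnear := (hγ.and (hγζ.eventually_mem hV)).filter_mono (nhdsWithin_le_nhds (s := Ioi 0))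
  filter_upwards [eventually_exists_pos_eq (by simp [hγ₀]) hdist hpos hnear]
    with t ⟨s, hs, ⟨hγs, hVs⟩, hst⟩
  refine ⟨γ s, hVs, hγs.2.1.symm ▸ hs, ?_⟩
  rw [← hst]
  exact (eq_or_eq_neg_norm_mul hu hγs.2.2).imp sub_eq_iff_eq_add'.1 fun h =>
    (sub_eq_iff_eq_add'.1 h).trans (sub_eq_add_neg _ _).symm

variable {w : ℂ}

variable (hΩ : IsOpen Ω) (hr : DifferentiableOn ℂ r Ω) (hu : ‖u‖ = 1)

include hΩ hr hu

-- The directions `u` and `-u` give images on opposite sides of the line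
-- `((conj u + u * deriv r ζ) * (x - ζ)).re = 0`.
lemma eventually_nontrivial_fiber_union (hfin : (fiber Ω r w).Finite) (hζ : ζ ∈ fiber Ω r w)
    (hb : conj u + u * deriv r ζ ≠ 0) {V : Set ℂ} (hV : V ∈ 𝓝 ζ) : ∀ᶠ t : ℝ in 𝓝[>] 0,
      ((fiber Ω r (w + t * u) ∪ fiber Ω r (w - t * u)) ∩ V).Nontrivial := by
  have hstrict := hasStrictDerivAt_of_differentiableOn hΩ hr hζ.1
  have hΩζ := hΩ.mem_nhds hζ.1
  have hcont : ∀ᶠ x in 𝓝 ζ, ContinuousAt r x := (hΩ.eventually_mem hζ.1).mono fun x hx =>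
    (hr.differentiableAt (hΩ.mem_nhds hx)).continuousAt
  have hisol : ∀ᶠ x in 𝓝[≠] ζ, lensMap r x ≠ lensMap r ζ := by
    filter_upwards [nhdsWithin_le_nhds hΩζ, self_mem_nhdsWithin, nhdsWithin_le_nhds
      ((hfin.subset (sdiff_subset (t := {ζ}))).isClosed.isOpen_compl.mem_nhds (by simp))]
      with x hxΩ hne hx h
    exact hx ⟨⟨hxΩ, h.trans hζ.2⟩, hne⟩
  have hneg : conj (-u) + -u * deriv r ζ = -(conj u + u * deriv r ζ) := by
    rw [map_neg, neg_mul, neg_add]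
  filter_upwards [eventually_exists_re_pos hstrict hu hb hcont hisol (inter_mem hΩζ hV),
    eventually_exists_re_pos hstrict ((norm_neg u).trans hu) (hneg ▸ neg_ne_zero.2 hb) hcont hisol
      (inter_mem hΩζ hV)] with t ⟨x, hxV, hx, hxt⟩ ⟨y, hyV, hy, hyt⟩
  rw [hneg, neg_mul, neg_re] at hy
  simp only [mul_neg, sub_neg_eq_add, ← sub_eq_add_neg, hζ.2] at hxt hyt
  exact ⟨x, ⟨hxt.imp (⟨hxV.1, ·⟩) (⟨hxV.1, ·⟩), hxV.2⟩,
    y, ⟨hyt.symm.imp (⟨hyV.1, ·⟩) (⟨hyV.1, ·⟩), hyV.2⟩, by rintro rfl; linarith⟩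

lemma eventually_two_mul_ncard_fiber_le (hfin : ∀ y, (fiber Ω r y).Finite)
    (hb : ∀ ζ ∈ fiber Ω r w, conj u + u * deriv r ζ ≠ 0) : ∀ᶠ t : ℝ in 𝓝[>] 0,
      2 * (fiber Ω r w).ncard ≤ (fiber Ω r (w + t * u)).ncard + (fiber Ω r (w - t * u)).ncard := by
  obtain ⟨V, hV, hdisj⟩ := (hfin w).t2_separation
  filter_upwards [(eventually_all_finite (hfin w)).2 fun ζ hζ =>
    eventually_nontrivial_fiber_union hΩ hr hu (hfin w) hζ (hb ζ hζ) ((hV ζ).2.mem_nhds (hV ζ).1)]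
    with t ht
  refine (two_mul_ncard_le (hfin w) ((hfin _).union (hfin _)) hdisj ht).trans (ncard_union_le _ _)

end Perturbation

section RegularSources

lemma finite_setOf_conj_add_mul_eq_zero (a : ℂ) :
    {u : ℂ | ‖u‖ = 1 ∧ conj u + u * a = 0}.Finite := by
  have hP : C a * X ^ 2 + 1 ≠ 0 := fun h => by simpa using congrArg (eval 0) h
  refine (finite_setOfPred_isRoot hP).subset fun u ⟨hu, hua⟩ => ?_
  have hnorm : u * conj u = 1 := by simp [mul_conj', hu]
  rw [mem_ofPred_eq, IsRoot, eval_add, eval_mul, eval_C, eval_pow, eval_X, eval_one]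
  linear_combination u * hua - hnorm

variable {Ω : Set ℂ} {r : ℂ → ℂ} (hΩ : IsOpen Ω) (hr : DifferentiableOn ℂ r Ω)

include hΩ hr

lemma volume_image_lensMap_eq_zero :
    volume (lensMap r '' {x ∈ Ω | ‖deriv r x‖ = 1}) = 0 := by
  refine addHaar_image_eq_zero_of_det_fderivWithin_eq_zero volume
    (f' := fun x => lensDeriv (deriv r x)) (fun x hx => ?_) fun x hx => ?_
  · exact (hasStrictFDerivAt_lensMap
      (hasStrictDerivAt_of_differentiableOn hΩ hr hx.1)).hasFDerivAt.hasFDerivWithinAt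
  · rw [det_lensDeriv, hx.2, one_pow, sub_self]

lemma volume_setOf_not_isRegularSource : volume {w | ¬IsRegularSource Ω r w} = 0 := by
  refine measure_mono_null (fun w hw => ?_) (volume_image_lensMap_eq_zero hΩ hr)
  simp only [mem_ofPred_eq, IsRegularSource, not_forall, not_not] at hw
  obtain ⟨x, hx, hx₁⟩ := hw
  exact ⟨x, ⟨hx.1, hx₁⟩, hx.2⟩

lemma exists_isRegularSource_two_mul_ncard_fiber_le (hfin : ∀ w, (fiber Ω r w).Finite) (w : ℂ) :
    ∃ w₁ w₂, IsRegularSource Ω r w₁ ∧ IsRegularSource Ω r w₂ ∧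
      2 * (fiber Ω r w).ncard ≤ (fiber Ω r w₁).ncard + (fiber Ω r w₂).ncard := by
  have hadd : volume {y | ¬IsRegularSource Ω r (w + y)} = 0 :=
    (measurePreserving_add_left volume w).quasiMeasurePreserving.preimage_null
      (volume_setOf_not_isRegularSource hΩ hr)
  have hsub : volume {y | ¬IsRegularSource Ω r (w - y)} = 0 :=
    (Measure.measurePreserving_sub_left volume w).quasiMeasurePreserving.preimage_null
      (volume_setOf_not_isRegularSource hΩ hr)
  obtain ⟨u, hu, hub, hfreq⟩ := exists_norm_eq_one_frequently_notMem volume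
    (by simp [Complex.rank_real_complex])
    ((hfin w).biUnion fun ζ _ => finite_setOf_conj_add_mul_eq_zero (deriv r ζ))
    (measure_union_null hadd hsub)
  have hb : ∀ ζ ∈ fiber Ω r w, conj u + u * deriv r ζ ≠ 0 := fun ζ hζ h =>
    hub (mem_biUnion hζ ⟨hu, h⟩)
  obtain ⟨t, ht, hcard⟩ := (hfreq.and_eventually
    (eventually_two_mul_ncard_fiber_le hΩ hr hu hfin hb)).exists
  rw [real_smul] at ht
  exact ⟨_, _, by_contra fun h => ht (.inl h), by_contra fun h => ht (.inr h), hcard⟩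

end RegularSources

section ImageCount

variable {ι : Type*} [Fintype ι] {z : ι → ℂ} {σ : ι → ℂ}

-- The conjugate lens equation expresses `conj x` through `deflection z σ x`; substituting this into
-- the lens equation leaves an equation in `x` alone.
lemma sub_mul_prod_eq_sum_of_mem_fiber [DecidableEq ι] {w x : ℂ}
    (hx : x ∈ fiber (range z)ᶜ (deflection z σ) w) :
    (x - w) * ∏ j, (deflection z σ x + (conj w - conj (z j))) =
      ∑ j, conj (σ j) * ∏ i ∈ Finset.univ.erase j, (deflection z σ x + (conj w - conj (z i))) := by
  have hconj : ∀ j, deflection z σ x + (conj w - conj (z j)) = conj (x - z j) := fun j => by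
    nth_rw 2 [← add_conj_eq_of_mem_fiber hx]
    simp only [map_sub, map_add, conj_conj]
    ring
  have hsub : x - w = conj (deflection z σ x) :=
    (eq_sub_of_add_eq' (add_conj_eq_of_mem_fiber hx)).symm
  simp only [hconj]
  rw [hsub, deflection, map_sum, Finset.sum_mul]
  refine Finset.sum_congr rfl fun j _ => ?_
  rw [← Finset.mul_prod_erase _ _ (Finset.mem_univ j), map_div₀, ← mul_assoc,
    div_mul_cancel₀ _ ((_root_.map_ne_zero conj).2 (notMem_range_iff.1 hx.1 j))]

variable (hι : 2 ≤ Fintype.card ι) (hz : Function.Injective z) (hσ : ∀ j, σ j ≠ 0) (w : ℂ)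

include hι hz hσ

lemma finite_fiber_deflection : (fiber (range z)ᶜ (deflection z σ) w).Finite := by
  classical
  have : Nontrivial ι := Fintype.one_lt_card_iff_nontrivial.1 hι
  set A := Lagrange.nodal Finset.univ z
  set D : ι → ℂ[X] := fun j => deflectionNum z σ + C (conj w - conj (z j)) * A with hD
  set P := (X - C w) * ∏ j, D j -
    A * ∑ j, C (conj (σ j)) * ∏ i ∈ Finset.univ.erase j, D i with hP
  have hP₀ : P ≠ 0 := by
    obtain ⟨k, hk⟩ := hz.exists_ne w
    have hAk : A.eval (z k) = 0 := Lagrange.eval_nodal_at_node (Finset.mem_univ k)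
    have hNk : (deflectionNum z σ).eval (z k) ≠ 0 := by
      rw [eval_deflectionNum_node]
      exact mul_ne_zero (hσ k) (eval_nodal_erase_ne_zero hz k)
    refine fun h => mul_ne_zero (sub_ne_zero.2 hk) (pow_ne_zero (Fintype.card ι) hNk) ?_
    simpa [hP, hD, hAk, eval_prod] using congrArg (eval (z k)) h
  refine (finite_setOfPred_isRoot hP₀).subset fun x hx => ?_
  have hDx : ∀ j, (D j).eval x =
      A.eval x * (deflection z σ x + (conj w - conj (z j))) := fun j => by
    rw [hD, eval_add, eval_mul, eval_C, eval_deflectionNum hx.1]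
    ring
  have hcard : Fintype.card ι = (Fintype.card ι - 1) + 1 := by lia
  simp only [mem_ofPred_eq, IsRoot, hP, eval_sub, eval_mul, eval_X, eval_C, eval_prod,
    eval_finsetSum, hDx, Finset.prod_mul_distrib, Finset.prod_const, Finset.card_univ,
    Finset.card_erase_of_mem (Finset.mem_univ _)]
  rw [mul_left_comm, sub_mul_prod_eq_sum_of_mem_fiber hx, hcard, pow_succ', mul_assoc,
    Finset.mul_sum, sub_eq_zero]
  simp only [Nat.add_sub_cancel, mul_left_comm]

lemma ncard_fiber_le_of_isRegularSource (hw : IsRegularSource (range z)ᶜ (deflection z σ) w) :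
    (fiber (range z)ᶜ (deflection z σ) w).ncard ≤ 5 * Fintype.card ι - 5 := by
  have hfin := finite_fiber_deflection hι hz hσ w
  have hunion : fiber (range z)ᶜ (deflection z σ) w ⊆
      {x ∈ fiber (range z)ᶜ (deflection z σ) w | ‖deriv (deflection z σ) x‖ < 1} ∪
      {x ∈ fiber (range z)ᶜ (deflection z σ) w | 1 < ‖deriv (deflection z σ) x‖} :=
    fun x hx => (hw x hx).lt_or_gt.imp (⟨hx, ·⟩) (⟨hx, ·⟩)
  have hcard := (ncard_le_ncard hunion ((hfin.subset (sep_subset _ _)).union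
    (hfin.subset (sep_subset _ _)))).trans (ncard_union_le _ _)
  have hattr := ncard_attracting_le hι hz hσ w
  have hdeg := one_sub_card_le_degree hz hσ hw
  rw [degree] at hdeg
  lia

lemma ncard_fiber_deflection_le :
    (fiber (range z)ᶜ (deflection z σ) w).ncard ≤ 5 * Fintype.card ι - 5 := by
  obtain ⟨w₁, w₂, hw₁, hw₂, hcard⟩ := exists_isRegularSource_two_mul_ncard_fiber_le
    isOpen_compl_range differentiableOn_deflection (finite_fiber_deflection hι hz hσ) w
  have h₁ := ncard_fiber_le_of_isRegularSource hι hz hσ w₁ hw₁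
  have h₂ := ncard_fiber_le_of_isRegularSource hι hz hσ w₂ hw₂
  lia

end ImageCount

lemma setOf_eq_fiber {ι : Type*} [Fintype ι] (z σ : ι → ℂ) (w : ℂ) :
    {p : ℂ | (∀ j, p ≠ z j) ∧ w = p - ∑ j, σ j / (conj p - conj (z j))} =
      fiber (range z)ᶜ (deflection z (conj ∘ σ)) w := by
  ext p
  simp [fiber, lensMap, deflection, eq_comm]

end PointMassLens

theorem point_mass_lens_image_bound_general {ι : Type*} [Fintype ι] (hι : 2 ≤ Fintype.card ι)
    (z : ι → ℂ) (hz : Function.Injective z) (σ : ι → ℂ) (hσ : ∀ j, σ j ≠ 0) (w : ℂ) :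
    {p : ℂ | (∀ j, p ≠ z j) ∧
      w = p - ∑ j, σ j / (starRingEnd ℂ p - starRingEnd ℂ (z j))}.Finite ∧
    {p : ℂ | (∀ j, p ≠ z j) ∧
      w = p - ∑ j, σ j / (starRingEnd ℂ p - starRingEnd ℂ (z j))}.ncard ≤
        5 * Fintype.card ι - 5 := by
  have hσ' : ∀ j, (starRingEnd ℂ ∘ σ) j ≠ 0 := fun j => (map_ne_zero _).2 (hσ j)
  rw [PointMassLens.setOf_eq_fiber]
  exact ⟨PointMassLens.finite_fiber_deflection hι hz hσ' w,
    PointMassLens.ncard_fiber_deflection_le hι hz hσ' w⟩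

/-- The number of images produced by an `n`-point-mass planar lens without shear
is at most `5n - 5` (Khavinson–Neumann, conjectured by Rhie). -/
theorem point_mass_lens_image_bound (n : ℕ) (hn : 2 ≤ n)
    (z : Fin n → ℂ) (hz : Function.Injective z)
    (σ : Fin n → ℝ) (hσ : ∀ j, 0 < σ j) (w : ℂ)
    (S : Set ℂ)
    (hS : S = {p : ℂ | (∀ j, p ≠ z j) ∧
      w = p - ∑ j, (σ j : ℂ) / (starRingEnd ℂ p - starRingEnd ℂ (z j))})
    (hfin : S.Finite) :
    S.ncard ≤ 5 * n - 5 := by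
  simpa [hS] using (point_mass_lens_image_bound_general (by simpa using hn) z hz
    (fun j => (σ j : ℂ)) (fun j => ofReal_ne_zero.2 (hσ j).ne') w).2
end

section
/- Let n ≥ 2, let z₁, …, zₙ be distinct points of ℂ and σ₁, …, σₙ positive real numbers, and let w ∈ ℂ. Define F : ℂ \ {z₁, …, zₙ} → ℂ by F(z) = z − Σⱼ σⱼ/(conj(z) − conj(zⱼ)) − w, and let S be its zero set. Assume S is finite and that at every z₀ ∈ S the real Fréchet derivative of F (viewing ℂ as ℝ²) is invertible. Then the cardinality of S is even when n is odd and odd when n is even. -/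
open Complex

/-!
Write `τ z = w + ∑ j, conj (σ j / (z - z j))`, so that the images are the fixed points of `τ`. The
square of `τ` is a rational function of `z`, and clearing denominators in `τ (τ z) = z` gives a
polynomial of degree at most `n ^ 2 + 1`. On its roots away from the poles, `τ` is an involution
which preserves multiplicities, since it conjugates `τ ∘ τ` to itself. The same argument in the
chart at infinity, where `τ ∞ = w` and `τ` exchanges `w` with `∞` precisely when `w` is a pole,
shows that the multiplicity of the only pole that can be a root equals the defect of the degree
from `n ^ 2 + 1`. Modulo `2` the remaining pairs cancel, so the multiplicities of the fixed points
of `τ` add up to `n ^ 2 + 1 ≡ n + 1`. At a multiple root that is fixed by `τ`, the differential of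
`τ` is conjugate-linear with square `1`, hence fixes a nonzero vector; nondegenerate images are
therefore simple roots.
-/

open Polynomial Asymptotics Filter Topology
open scoped ComplexConjugate

namespace RationalLens

section Homogenize

variable {R A : Type*} [CommSemiring R] [CommSemiring A] [Algebra R A]

lemma aeval_homogenize_eq_sum (f : R[X]) (n : ℕ) (x y : A) :
    MvPolynomial.aeval ![x, y] (f.homogenize n) =
      ∑ i ∈ Finset.range (n + 1), f.coeff i • (x ^ i * y ^ (n - i)) := by
  simp [homogenize, Finset.Nat.sum_antidiagonal_eq_sum_range_succ_mk, map_sum,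
    MvPolynomial.aeval_monomial, Finsupp.prod_fintype, Algebra.smul_def]

lemma aeval_homogenize_reflect (f : R[X]) (n : ℕ) (x y : A) :
    MvPolynomial.aeval ![x, y] ((f.reflect n).homogenize n) =
      MvPolynomial.aeval ![y, x] (f.homogenize n) := by
  rw [aeval_homogenize_eq_sum, aeval_homogenize_eq_sum, ← Finset.sum_range_reflect]
  refine Finset.sum_congr rfl fun i hi => ?_
  have hin : i ≤ n := Nat.lt_succ_iff.mp (Finset.mem_range.mp hi)
  rw [coeff_reflect, Nat.add_sub_cancel, revAt_le (Nat.sub_le n i), Nat.sub_sub_self hin, mul_comm]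

lemma dvd_aeval_homogenize_sub {A : Type*} [CommRing A] [Algebra R A] (f : R[X]) (n : ℕ)
    (x y : A) :
    y ∣ MvPolynomial.aeval ![x, y] (f.homogenize n) - f.coeff n • x ^ n := by
  rw [aeval_homogenize_eq_sum, Finset.sum_range_succ, Nat.sub_self, pow_zero, mul_one,
    add_sub_cancel_right]
  refine Finset.dvd_sum fun i hi => ?_
  rw [Algebra.smul_def, ← mul_assoc]
  exact (dvd_pow_self y (Nat.sub_ne_zero_of_lt (Finset.mem_range.mp hi))).mul_left _

lemma natDegree_aeval_homogenize_le (f : R[X]) (n : ℕ) {p q : R[X]} {d : ℕ}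
    (hp : p.natDegree ≤ d) (hq : q.natDegree ≤ d) :
    (MvPolynomial.aeval ![p, q] (f.homogenize n)).natDegree ≤ n * d := by
  rw [aeval_homogenize_eq_sum]
  refine natDegree_sum_le_of_forall_le _ _ fun i hi => (natDegree_smul_le _ _).trans ?_
  have hin : i ≤ n := Nat.lt_succ_iff.mp (Finset.mem_range.mp hi)
  calc (p ^ i * q ^ (n - i)).natDegree ≤ i * d + (n - i) * d :=
        natDegree_mul_le_of_le (natDegree_pow_le_of_le i hp) (natDegree_pow_le_of_le (n - i) hq)
    _ = n * d := by rw [← add_mul, Nat.add_sub_cancel' hin]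

end Homogenize

section Reflect

variable {R : Type*}

lemma reflect_pow [Semiring R] (f : R[X]) {d : ℕ} (hf : f.natDegree ≤ d) (n : ℕ) :
    (f ^ n).reflect (n * d) = f.reflect d ^ n := by
  induction n with
  | zero => simp
  | succ n ih =>
    rw [Nat.add_mul, one_mul, pow_succ, reflect_mul _ _ (natDegree_pow_le_of_le n hf) hf, ih,
      pow_succ]

lemma reflect_sum [Semiring R] {ι : Type*} (s : Finset ι) (f : ι → R[X]) (N : ℕ) :
    (∑ i ∈ s, f i).reflect N = ∑ i ∈ s, (f i).reflect N := by
  ext k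
  simp only [coeff_reflect, finsetSum_coeff]

lemma aeval_homogenize_reflect_reflect [CommSemiring R] (f : R[X]) (n : ℕ) {p q : R[X]} {d : ℕ}
    (hp : p.natDegree ≤ d) (hq : q.natDegree ≤ d) :
    MvPolynomial.aeval ![p.reflect d, q.reflect d] (f.homogenize n) =
      (MvPolynomial.aeval ![p, q] (f.homogenize n)).reflect (n * d) := by
  rw [aeval_homogenize_eq_sum, aeval_homogenize_eq_sum, reflect_sum]
  refine Finset.sum_congr rfl fun i hi => ?_
  have hnd : n * d = i * d + (n - i) * d := by
    rw [← add_mul, Nat.add_sub_cancel' (Nat.lt_succ_iff.mp (Finset.mem_range.mp hi))]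
  rw [smul_eq_C_mul, smul_eq_C_mul, reflect_C_mul, hnd,
    reflect_mul _ _ (natDegree_pow_le_of_le i hp) (natDegree_pow_le_of_le _ hq),
    reflect_pow p hp, reflect_pow q hq]

lemma natDegree_reflect_le_of_le [Semiring R] {f : R[X]} {N : ℕ} (hf : f.natDegree ≤ N) :
    (f.reflect N).natDegree ≤ N :=
  natDegree_reflect_le.trans (max_le le_rfl hf)

lemma eval_zero_reflect [Semiring R] (f : R[X]) (N : ℕ) : (f.reflect N).eval 0 = f.coeff N := by
  rw [← coeff_zero_eq_eval_zero, coeff_reflect, revAt_le N.zero_le, Nat.sub_zero]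

lemma rootMultiplicity_zero_reflect [CommRing R] {f : R[X]} {N : ℕ} (hf : f.natDegree ≤ N)
    (h0 : f ≠ 0) :
    (f.reflect N).rootMultiplicity 0 = N - f.natDegree := by
  rw [rootMultiplicity_eq_natTrailingDegree']
  refine le_antisymm (natTrailingDegree_le_of_ne_zero ?_)
    (le_natTrailingDegree (mt reflect_eq_zero_iff.mp h0) fun m hm => ?_)
  · rwa [coeff_reflect, revAt_le (Nat.sub_le _ _), Nat.sub_sub_self hf, coeff_natDegree,
      leadingCoeff_ne_zero]
  · rw [coeff_reflect, revAt_le (by lia)]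
    exact coeff_eq_zero_of_natDegree_lt (by lia)

end Reflect

section PartialFractions

variable {K ι : Type*} [Field K] [Fintype ι] [DecidableEq ι]

open Lagrange

/-- The numerator of `c + ∑ j, r j / (X - z j)` over the common denominator
`Lagrange.nodal Finset.univ z`. -/
noncomputable def partialFractionNum (z r : ι → K) (c : K) : K[X] :=
  C c * nodal Finset.univ z + ∑ j, C (r j) * nodal (Finset.univ.erase j) z

lemma natDegree_partialFractionNum_le (z r : ι → K) (c : K) :
    (partialFractionNum z r c).natDegree ≤ Fintype.card ι := by
  refine natDegree_add_le_of_degree_le ((natDegree_C_mul_le _ _).trans ?_)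
    (natDegree_sum_le_of_forall_le _ _ fun j _ => (natDegree_C_mul_le _ _).trans ?_)
  · rw [natDegree_nodal, Finset.card_univ]
  · rw [natDegree_nodal]
    exact Finset.card_le_univ _

lemma eval_partialFractionNum_div {z : ι → K} {x : K} (hx : ∀ j, x ≠ z j) (r : ι → K) (c : K) :
    (partialFractionNum z r c).eval x / (nodal Finset.univ z).eval x =
      c + ∑ j, r j / (x - z j) := by
  have hnodal : (nodal Finset.univ z).eval x ≠ 0 := eval_nodal_not_at_node fun j _ => hx j
  have hterm (j : ι) : r j / (x - z j) * (nodal Finset.univ z).eval x =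
      r j * (nodal (Finset.univ.erase j) z).eval x := by
    rw [nodal_eq_mul_nodal_erase (Finset.mem_univ j), eval_mul, eval_sub, eval_X, eval_C,
      ← mul_assoc, div_mul_cancel₀ _ (sub_ne_zero.mpr (hx j))]
  rw [div_eq_iff hnodal, add_mul, Finset.sum_mul]
  simp only [partialFractionNum, eval_add, eval_mul, eval_C, eval_finsetSum, hterm]

lemma isCoprime_partialFractionNum_nodal {z r : ι → K} (hz : Function.Injective z)
    (hr : ∀ j, r j ≠ 0) (c : K) :
    IsCoprime (partialFractionNum z r c) (nodal Finset.univ z) := by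
  refine IsCoprime.prod_right fun j _ => IsCoprime.symm ?_
  rw [(irreducible_X_sub_C (z j)).coprime_iff_not_dvd, dvd_iff_isRoot, IsRoot.def]
  have hother : ∀ i ≠ j, (nodal (Finset.univ.erase i) z).eval (z j) = 0 := fun i hij =>
    eval_nodal_at_node (Finset.mem_erase.mpr ⟨hij.symm, Finset.mem_univ j⟩)
  have hself : (nodal (Finset.univ.erase j) z).eval (z j) ≠ 0 :=
    eval_nodal_not_at_node fun i hi => hz.ne (Finset.ne_of_mem_erase hi).symm
  rw [partialFractionNum, eval_add, eval_mul, eval_nodal_at_node (Finset.mem_univ j), mul_zero,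
    zero_add, eval_finsetSum, Finset.sum_eq_single_of_mem j (Finset.mem_univ j), eval_mul, eval_C]
  · exact mul_ne_zero (hr j) hself
  · intro i _ hij
    rw [eval_mul, hother i hij, mul_zero]

end PartialFractions

section LocalOrder

lemma isTheta_mul_left_of_tendsto {α 𝕜 : Type*} [NormedField 𝕜] {l : Filter α} {f g : α → 𝕜}
    {c : 𝕜} (hc : c ≠ 0) (hf : Tendsto f l (𝓝 c)) : (fun x => f x * g x) =Θ[l] g := by
  have hf1 : f =Θ[l] fun _ => (1 : 𝕜) :=
    ((isEquivalent_const_iff_tendsto hc).mpr hf).isTheta.trans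
      (isTheta_const_const hc one_ne_zero)
  simpa only [one_mul] using hf1.mul (isTheta_refl g l)

lemma isTheta_eval_sub_pow_rootMultiplicity {𝕜 : Type*} [NormedField 𝕜] {f : 𝕜[X]} (hf : f ≠ 0)
    (a : 𝕜) : (fun x => f.eval x) =Θ[𝓝 a] fun x => (x - a) ^ f.rootMultiplicity a := by
  obtain ⟨g, hfg, hdvd⟩ := exists_eq_pow_rootMultiplicity_mul_and_not_dvd f hf a
  have hga : g.eval a ≠ 0 := fun h => hdvd (dvd_iff_isRoot.mpr h)
  have heval : (fun x => f.eval x) = fun x => g.eval x * (x - a) ^ f.rootMultiplicity a := by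
    funext x
    conv_lhs => rw [hfg]
    simp only [eval_mul, eval_pow, eval_sub, eval_X, eval_C, mul_comm]
  rw [heval]
  exact isTheta_mul_left_of_tendsto hga (g.continuous.tendsto a)

variable {𝕜 E F : Type*} [NontriviallyNormedField 𝕜] [NormedAddCommGroup E] [NormedSpace 𝕜 E]
  [NormedAddCommGroup F] [NormedSpace 𝕜 F]

lemma isLittleO_norm_sub_pow_norm_sub_pow (a : E) {k m : ℕ} (hkm : k < m) :
    (fun x => ‖x - a‖ ^ m) =o[𝓝 a] fun x => ‖x - a‖ ^ k :=
  (isLittleO_pow_pow hkm).comp_tendsto (tendsto_norm_sub_self a)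

lemma le_of_norm_sub_pow_isBigO_norm_sub_pow (a : E) [(𝓝[≠] a).NeBot] {k m : ℕ}
    (h : (fun x => ‖x - a‖ ^ k) =O[𝓝 a] fun x => ‖x - a‖ ^ m) : m ≤ k := by
  by_contra! hkm
  refine isLittleO_irrefl' (l := 𝓝[≠] a) (f' := fun x => ‖x - a‖ ^ k) ?_
    ((h.trans_isLittleO (isLittleO_norm_sub_pow_norm_sub_pow a hkm)).mono nhdsWithin_le_nhds)
  refine Eventually.frequently (eventually_mem_nhdsWithin.mono fun x hx => ?_)
  exact norm_ne_zero_iff.mpr (pow_ne_zero k (norm_ne_zero_iff.mpr (sub_ne_zero.mpr hx)))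

variable {φ : E → F} {ψ : F → E} {φ' : E →L[𝕜] F} {ψ' : F →L[𝕜] E} {a : E} {k m : ℕ}

/- `φ` carries the displacement `ψ (φ x) - x` to the displacement of `φ ∘ ψ` at `φ x`, and it is
Lipschitz. When `1 < m`, `ψ ∘ φ` is tangent to the identity at `a`, so `x - a = O(φ x - φ a)`. -/
lemma order_comp_sub_id_le [(𝓝[≠] a).NeBot] (hφ : HasStrictFDerivAt φ φ' a)
    (hψ : HasStrictFDerivAt ψ ψ' (φ a)) (ha : ψ (φ a) = a) (hk : k ≠ 0)
    (hm : (fun x => ψ (φ x) - x) =O[𝓝 a] fun x => ‖x - a‖ ^ m)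
    (hk' : (fun y => ‖y - φ a‖ ^ k) =O[𝓝 (φ a)] fun y => φ (ψ y) - y) :
    m ≤ k := by
  rcases Nat.lt_or_ge 1 m with h1m | hm1
  swap
  · exact hm1.trans (Nat.one_le_iff_ne_zero.mpr hk)
  have hφa : Tendsto φ (𝓝 a) (𝓝 (φ a)) := hφ.continuousAt
  have hψφa : Tendsto (fun x => ψ (φ x)) (𝓝 a) (𝓝 a) := by
    simpa only [Function.comp_def, ha] using hψ.continuousAt.tendsto.comp hφa
  have hmove : (fun x => x - a) =O[𝓝 a] fun x => φ x - φ a := by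
    have hsmall : (fun x => ψ (φ x) - x) =o[𝓝 a] fun x => x - a := by
      have := hm.trans_isLittleO (isLittleO_norm_sub_pow_norm_sub_pow a h1m)
      simpa only [pow_one, isLittleO_norm_right] using this
    have hlip : (fun x => ψ (φ x) - a) =O[𝓝 a] fun x => φ x - φ a := by
      simpa only [Function.comp_def, ha] using hψ.hasFDerivAt.isBigO_sub.comp_tendsto hφa
    refine IsBigO.trans ?_ hlip
    exact hsmall.right_isBigO_add.congr_right fun x => by abel
  have hconj : (fun x => φ (ψ (φ x)) - φ x) =O[𝓝 a] fun x => ψ (φ x) - x :=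
    hφ.isBigO_sub.comp_tendsto (hψφa.prodMk_nhds tendsto_id)
  refine le_of_norm_sub_pow_isBigO_norm_sub_pow a ?_
  calc (fun x => ‖x - a‖ ^ k) =O[𝓝 a] fun x => ‖φ x - φ a‖ ^ k := hmove.norm_norm.pow k
    _ =O[𝓝 a] fun x => φ (ψ (φ x)) - φ x := hk'.comp_tendsto hφa
    _ =O[𝓝 a] fun x => ψ (φ x) - x := hconj
    _ =O[𝓝 a] fun x => ‖x - a‖ ^ m := hm

end LocalOrder

lemma eval_ne_zero_or_of_isCoprime {R : Type*} [CommRing R] [Nontrivial R] {p q : R[X]}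
    (hpq : IsCoprime p q) (x : R) : p.eval x ≠ 0 ∨ q.eval x ≠ 0 := by
  simpa only [coe_aeval_eq_eval] using aeval_ne_zero_of_isCoprime hpq x

lemma exists_conj_mul_eq_self {c : ℂ} (hc : conj c * c = 1) : ∃ h ≠ 0, conj (c * h) = h := by
  rcases eq_or_ne c (-1) with rfl | hne
  · exact ⟨I, I_ne_zero, by simp⟩
  · refine ⟨1 + conj c, fun h => hne ?_, ?_⟩
    · simpa using congrArg conj (eq_neg_of_add_eq_zero_right h)
    · rw [map_mul, map_add, map_one, conj_conj]
      linear_combination hc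

lemma sum_eq_sum_filter_fixed_of_involution {ι R : Type*} [DecidableEq ι] [Semiring R]
    [CharP R 2] {s : Finset ι} {τ : ι → ι} {f : ι → R} (hmaps : ∀ a ∈ s, τ a ∈ s)
    (hinv : ∀ a ∈ s, τ (τ a) = a) (hf : ∀ a ∈ s, f (τ a) = f a) :
    ∑ a ∈ s, f a = ∑ a ∈ s with τ a = a, f a := by
  have hmoved : ∑ a ∈ s with ¬τ a = a, f a = 0 := by
    refine Finset.sum_involution (fun a _ => τ a) (fun a ha => ?_) (fun a ha _ => ?_)
      (fun a ha => ?_) (fun a ha => hinv a (Finset.mem_filter.mp ha).1)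
    · rw [hf a (Finset.mem_filter.mp ha).1, CharTwo.add_self_eq_zero]
    · exact (Finset.mem_filter.mp ha).2
    · obtain ⟨has, hne⟩ := Finset.mem_filter.mp ha
      exact Finset.mem_filter.mpr ⟨hmaps a has, by rwa [hinv a has, eq_comm]⟩
  rw [← Finset.sum_filter_add_sum_filter_not s (fun a => τ a = a), hmoved, add_zero]

noncomputable section

/-- The antiholomorphic rational map `z ↦ conj (p z / q z)`, with junk value `0` at the zeros of
`q`. -/
def conjRatio (p q : ℂ[X]) (z : ℂ) : ℂ := conj (p.eval z / q.eval z)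

/-- The polynomial `q ^ n * f̄ (p / q)`, where `f̄` is `f` with conjugated coefficients: the value
`conj (f (conjRatio p q z))` with denominators cleared, for `f` of degree at most `n`. -/
def conjSubst (n : ℕ) (p q f : ℂ[X]) : ℂ[X] :=
  MvPolynomial.aeval ![p, q] ((f.map conj).homogenize n)

/-- The polynomial whose roots off the zeros of `q₁` are the fixed points of
`conjRatio p₂ q₂ ∘ conjRatio p₁ q₁`, for coprime `p₂`, `q₂` of degree at most `n`. Two pairs are
kept apart because, near the point at infinity, the two maps are read in different charts. -/
def returnPoly (n : ℕ) (p₁ q₁ p₂ q₂ : ℂ[X]) : ℂ[X] :=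
  X * conjSubst n p₁ q₁ q₂ - conjSubst n p₁ q₁ p₂

/-- The roots of `returnPoly n p q p q` that are not zeros of `q`; the map `conjRatio p q`
acts on them as an involution. -/
def returnRoots (n : ℕ) (p q : ℂ[X]) : Finset ℂ :=
  {a ∈ (returnPoly n p q p q).roots.toFinset | q.eval a ≠ 0}

end

lemma hasStrictFDerivAt_conjRatio (p : ℂ[X]) {q : ℂ[X]} {a : ℂ} (ha : q.eval a ≠ 0) :
    ∃ c : ℂ, HasStrictFDerivAt (conjRatio p q)
      ((conjCLE : ℂ →L[ℝ] ℂ) ∘L (c • (1 : ℂ →L[ℝ] ℂ))) a :=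
  ⟨_, conjCLE.hasStrictFDerivAt.comp a
    ((p.hasStrictDerivAt a).fun_div (q.hasStrictDerivAt a) ha).complexToReal_fderiv⟩

lemma eval_conjSubst {n : ℕ} (p : ℂ[X]) {q f : ℂ[X]} {a : ℂ} (hf : f.natDegree ≤ n)
    (ha : q.eval a ≠ 0) :
    (conjSubst n p q f).eval a = q.eval a ^ n * conj (f.eval (conjRatio p q a)) := by
  have hconj : (f.map conj).eval (p.eval a / q.eval a) = conj (f.eval (conjRatio p q a)) := by
    rw [conjRatio, ← eval_map_apply, conj_conj]
  have hcomp : (conjSubst n p q f).eval a =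
      MvPolynomial.eval ![p.eval a, q.eval a] ((f.map conj).homogenize n) := by
    rw [conjSubst, aeval_homogenize_eq_sum, eval_finsetSum, ← MvPolynomial.coe_aeval_eq_eval,
      RingHom.coe_coe, aeval_homogenize_eq_sum]
    simp only [eval_smul, eval_mul, eval_pow]
  rw [hcomp, eval_homogenize (natDegree_map_le.trans hf) _ ha]
  exact (mul_comm _ _).trans (congrArg _ hconj)

section ReturnPoly

variable {n : ℕ} {p₁ q₁ p₂ q₂ : ℂ[X]} {a : ℂ}

lemma eval_returnPoly (hp₂ : p₂.natDegree ≤ n) (hq₂ : q₂.natDegree ≤ n) (ha : q₁.eval a ≠ 0) :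
    (returnPoly n p₁ q₁ p₂ q₂).eval a = q₁.eval a ^ n *
      (a * conj (q₂.eval (conjRatio p₁ q₁ a)) - conj (p₂.eval (conjRatio p₁ q₁ a))) := by
  rw [returnPoly, eval_sub, eval_mul, eval_X, eval_conjSubst p₁ hq₂ ha, eval_conjSubst p₁ hp₂ ha]
  ring

lemma eval_returnPoly_of_ne_zero (hp₂ : p₂.natDegree ≤ n) (hq₂ : q₂.natDegree ≤ n)
    (ha : q₁.eval a ≠ 0) (hb : q₂.eval (conjRatio p₁ q₁ a) ≠ 0) :
    (returnPoly n p₁ q₁ p₂ q₂).eval a =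
      -(q₁.eval a ^ n * conj (q₂.eval (conjRatio p₁ q₁ a))) *
        (conjRatio p₂ q₂ (conjRatio p₁ q₁ a) - a) := by
  have hb' : conj (q₂.eval (conjRatio p₁ q₁ a)) ≠ 0 := (_root_.map_ne_zero _).mpr hb
  rw [eval_returnPoly hp₂ hq₂ ha, conjRatio.eq_def p₂, map_div₀]
  field_simp
  ring

lemma isRoot_returnPoly_iff (hp₂ : p₂.natDegree ≤ n) (hq₂ : q₂.natDegree ≤ n)
    (h₂ : p₂.eval (conjRatio p₁ q₁ a) ≠ 0 ∨ q₂.eval (conjRatio p₁ q₁ a) ≠ 0)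
    (ha : q₁.eval a ≠ 0) :
    (returnPoly n p₁ q₁ p₂ q₂).IsRoot a ↔
      q₂.eval (conjRatio p₁ q₁ a) ≠ 0 ∧ conjRatio p₂ q₂ (conjRatio p₁ q₁ a) = a := by
  by_cases hb : q₂.eval (conjRatio p₁ q₁ a) = 0
  · have hp : p₂.eval (conjRatio p₁ q₁ a) ≠ 0 := h₂.resolve_right (not_not.mpr hb)
    simp [IsRoot.def, eval_returnPoly hp₂ hq₂ ha, ha, hb, hp]
  · simp [IsRoot.def, eval_returnPoly_of_ne_zero hp₂ hq₂ ha hb, ha, hb, sub_eq_zero]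

lemma isTheta_eval_returnPoly (hp₂ : p₂.natDegree ≤ n) (hq₂ : q₂.natDegree ≤ n)
    (ha : q₁.eval a ≠ 0) (hb : q₂.eval (conjRatio p₁ q₁ a) ≠ 0) :
    (fun x => (returnPoly n p₁ q₁ p₂ q₂).eval x) =Θ[𝓝 a]
      fun x => conjRatio p₂ q₂ (conjRatio p₁ q₁ x) - x := by
  obtain ⟨c, hc⟩ := hasStrictFDerivAt_conjRatio p₁ ha
  have hq₁ : ContinuousAt (fun x => q₁.eval x) a := q₁.continuousAt
  have hq₂c : ContinuousAt (fun x => q₂.eval (conjRatio p₁ q₁ x)) a :=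
    q₂.continuousAt.comp hc.continuousAt
  have hunit : ContinuousAt
      (fun x => -(q₁.eval x ^ n * conj (q₂.eval (conjRatio p₁ q₁ x)))) a :=
    ((hq₁.pow n).mul (continuous_conj.continuousAt.comp hq₂c)).neg
  have hunit0 : -(q₁.eval a ^ n * conj (q₂.eval (conjRatio p₁ q₁ a))) ≠ 0 :=
    neg_ne_zero.mpr (mul_ne_zero (pow_ne_zero n ha) ((_root_.map_ne_zero _).mpr hb))
  refine EventuallyEq.trans_isTheta ?_ (isTheta_mul_left_of_tendsto hunit0 hunit)
  filter_upwards [hq₁.eventually_ne ha, hq₂c.eventually_ne hb] with x hx₁ hx₂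
  exact eval_returnPoly_of_ne_zero hp₂ hq₂ hx₁ hx₂

lemma isTheta_comp_sub_id_pow_rootMultiplicity (hp₂ : p₂.natDegree ≤ n) (hq₂ : q₂.natDegree ≤ n)
    (hN : returnPoly n p₁ q₁ p₂ q₂ ≠ 0) (ha : q₁.eval a ≠ 0)
    (hb : q₂.eval (conjRatio p₁ q₁ a) ≠ 0) :
    (fun x => conjRatio p₂ q₂ (conjRatio p₁ q₁ x) - x) =Θ[𝓝 a]
      fun x => ‖x - a‖ ^ (returnPoly n p₁ q₁ p₂ q₂).rootMultiplicity a := by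
  simp_rw [← norm_pow]
  exact ((isTheta_eval_returnPoly hp₂ hq₂ ha hb).symm.trans
    (isTheta_eval_sub_pow_rootMultiplicity hN a)).norm_right

lemma rootMultiplicity_returnPoly_le (hp₁ : p₁.natDegree ≤ n) (hq₁ : q₁.natDegree ≤ n)
    (hp₂ : p₂.natDegree ≤ n) (hq₂ : q₂.natDegree ≤ n) (hN : returnPoly n p₁ q₁ p₂ q₂ ≠ 0)
    (hN' : returnPoly n p₂ q₂ p₁ q₁ ≠ 0) (ha : q₁.eval a ≠ 0)
    (hb : q₂.eval (conjRatio p₁ q₁ a) ≠ 0) (hfix : conjRatio p₂ q₂ (conjRatio p₁ q₁ a) = a) :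
    (returnPoly n p₁ q₁ p₂ q₂).rootMultiplicity a ≤
      (returnPoly n p₂ q₂ p₁ q₁).rootMultiplicity (conjRatio p₁ q₁ a) := by
  have ha' : q₁.eval (conjRatio p₂ q₂ (conjRatio p₁ q₁ a)) ≠ 0 := by rwa [hfix]
  obtain ⟨c₁, hc₁⟩ := hasStrictFDerivAt_conjRatio p₁ ha
  obtain ⟨c₂, hc₂⟩ := hasStrictFDerivAt_conjRatio p₂ hb
  refine order_comp_sub_id_le hc₁ hc₂ hfix ?_
    (isTheta_comp_sub_id_pow_rootMultiplicity hp₂ hq₂ hN ha hb).isBigO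
    (isTheta_comp_sub_id_pow_rootMultiplicity hp₁ hq₁ hN' hb ha').isBigO_symm
  refine ((rootMultiplicity_pos hN').mpr ?_).ne'
  rw [IsRoot.def, eval_returnPoly_of_ne_zero hp₁ hq₁ hb ha', hfix, sub_self, mul_zero]

lemma rootMultiplicity_returnPoly_conjRatio (hp₁ : p₁.natDegree ≤ n) (hq₁ : q₁.natDegree ≤ n)
    (hp₂ : p₂.natDegree ≤ n) (hq₂ : q₂.natDegree ≤ n) (hN : returnPoly n p₁ q₁ p₂ q₂ ≠ 0)
    (hN' : returnPoly n p₂ q₂ p₁ q₁ ≠ 0) (ha : q₁.eval a ≠ 0)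
    (hb : q₂.eval (conjRatio p₁ q₁ a) ≠ 0) (hfix : conjRatio p₂ q₂ (conjRatio p₁ q₁ a) = a) :
    (returnPoly n p₂ q₂ p₁ q₁).rootMultiplicity (conjRatio p₁ q₁ a) =
      (returnPoly n p₁ q₁ p₂ q₂).rootMultiplicity a := by
  refine le_antisymm ?_ (rootMultiplicity_returnPoly_le hp₁ hq₁ hp₂ hq₂ hN hN' ha hb hfix)
  have h := rootMultiplicity_returnPoly_le hp₂ hq₂ hp₁ hq₁ hN' hN hb (by rwa [hfix])
    (by rw [hfix])
  rwa [hfix] at h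

end ReturnPoly

section Infinity

variable {n : ℕ} {p q : ℂ[X]}

lemma conjSubst_reflect (n : ℕ) (p q f : ℂ[X]) :
    conjSubst n q p (f.reflect n) = conjSubst n p q f := by
  rw [conjSubst, ← reflect_map, aeval_homogenize_reflect, conjSubst]

lemma conjSubst_reflect_reflect (hp : p.natDegree ≤ n) (hq : q.natDegree ≤ n) (f : ℂ[X]) :
    conjSubst n (p.reflect n) (q.reflect n) f = (conjSubst n p q f).reflect (n * n) :=
  aeval_homogenize_reflect_reflect _ n hp hq

lemma natDegree_conjSubst_le (hp : p.natDegree ≤ n) (hq : q.natDegree ≤ n) (f : ℂ[X]) :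
    (conjSubst n p q f).natDegree ≤ n * n :=
  natDegree_aeval_homogenize_le _ n hp hq

lemma natDegree_returnPoly_le (hp : p.natDegree ≤ n) (hq : q.natDegree ≤ n) (p₂ q₂ : ℂ[X]) :
    (returnPoly n p q p₂ q₂).natDegree ≤ n * n + 1 := by
  refine (natDegree_sub_le_of_le (natDegree_mul_le_of_le natDegree_X_le
    (natDegree_conjSubst_le hp hq q₂)) (natDegree_conjSubst_le hp hq p₂)).trans ?_
  lia

lemma returnPoly_swap_reflect (n : ℕ) (p q : ℂ[X]) :
    returnPoly n q p (p.reflect n) (q.reflect n) = returnPoly n p q p q := by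
  rw [returnPoly, conjSubst_reflect, conjSubst_reflect, returnPoly]

lemma returnPoly_reflect (hp : p.natDegree ≤ n) (hq : q.natDegree ≤ n) :
    returnPoly n (p.reflect n) (q.reflect n) q p =
      -(returnPoly n p q p q).reflect (n * n + 1) := by
  have hX : (X * conjSubst n p q q).reflect (n * n + 1) =
      (conjSubst n p q q).reflect (n * n) := by
    rw [add_comm, reflect_mul _ _ natDegree_X_le (natDegree_conjSubst_le hp hq q),
      reflect_one_X, one_mul]
  have hone : (conjSubst n p q p).reflect (n * n + 1) =
      X * (conjSubst n p q p).reflect (n * n) := by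
    have h := reflect_mul 1 (conjSubst n p q p) (natDegree_one.le.trans zero_le_one)
      (natDegree_conjSubst_le hp hq p)
    rwa [one_mul, reflect_one, pow_one, add_comm] at h
  rw [returnPoly, conjSubst_reflect_reflect hp hq, conjSubst_reflect_reflect hp hq, returnPoly,
    reflect_sub, hX, hone, neg_sub]

lemma dvd_returnPoly_sub (n : ℕ) (p₁ q₁ p₂ q₂ : ℂ[X]) :
    q₁ ∣ returnPoly n p₁ q₁ p₂ q₂ -
      (C (conj (q₂.coeff n)) * X - C (conj (p₂.coeff n))) * p₁ ^ n := by
  have hq := dvd_aeval_homogenize_sub (q₂.map conj) n p₁ q₁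
  have hp := dvd_aeval_homogenize_sub (p₂.map conj) n p₁ q₁
  convert (hq.mul_left X).sub hp using 1
  rw [returnPoly, conjSubst, conjSubst, coeff_map, coeff_map, smul_eq_C_mul, smul_eq_C_mul]
  ring

end Infinity

section FixedPoints

variable {n : ℕ} {p q : ℂ[X]} {a : ℂ}

lemma conjRatio_reflect_zero (n : ℕ) (p q : ℂ[X]) :
    conjRatio (p.reflect n) (q.reflect n) 0 = conj (p.coeff n / q.coeff n) := by
  rw [conjRatio, eval_zero_reflect, eval_zero_reflect]

lemma natDegree_eq_one_of_returnPoly_eq_zero (hp : p.natDegree ≤ q.natDegree) (hq0 : q ≠ 0)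
    (hpq : IsCoprime p q) (hN : returnPoly q.natDegree p q p q = 0) : q.natDegree = 1 := by
  have hlead : conj q.leadingCoeff ≠ 0 := (_root_.map_ne_zero _).mpr (leadingCoeff_ne_zero.mpr hq0)
  have hle : q.natDegree ≤ 1 := by
    have hdvd := dvd_returnPoly_sub q.natDegree p q p q
    rw [hN, zero_sub, dvd_neg] at hdvd
    refine (natDegree_le_of_dvd (hpq.symm.pow_right.dvd_of_dvd_mul_right hdvd) ?_).trans ?_
    · intro h
      apply hlead
      simpa using congrArg (coeff · 1) h
    · compute_degree
  refine hle.antisymm (Nat.one_le_iff_ne_zero.mpr fun h0 => ?_)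
  have hconst : ∀ x, q.eval x ≠ 0 ∧ conjRatio p q x = conjRatio p q 0 := by
    rw [h0] at hp
    rw [eq_C_of_natDegree_le_zero h0.le] at hq0 ⊢
    rw [eq_C_of_natDegree_le_zero hp]
    simpa [conjRatio] using hq0
  have hfix (x : ℂ) : conjRatio p q 0 = x := by
    have hx := (isRoot_returnPoly_iff hp le_rfl (eval_ne_zero_or_of_isCoprime hpq _)
      (hconst x).1).mp (by rw [hN]; exact eval_zero)
    rw [← hx.2, (hconst (conjRatio p q x)).2]
  exact zero_ne_one ((hfix 0).symm.trans (hfix 1))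

lemma eval_derivative_returnPoly_ne_zero (hp : p.natDegree ≤ n) (hq : q.natDegree ≤ n)
    (ha : q.eval a ≠ 0) (hfix : conjRatio p q a = a)
    (hnd : Function.Injective (fderiv ℝ (fun x => x - conjRatio p q x) a)) :
    (derivative (returnPoly n p q p q)).eval a ≠ 0 := by
  intro hN'
  set N := returnPoly n p q p q
  have hN : N.eval a = 0 := by
    rw [eval_returnPoly_of_ne_zero hp hq ha (by rwa [hfix]), hfix, hfix, sub_self, mul_zero]
  have hsmall : (fun x => conjRatio p q (conjRatio p q x) - x) =o[𝓝 a] fun x => x - a := by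
    refine (isTheta_eval_returnPoly hp hq ha (by rwa [hfix])).isBigO_symm.trans_isLittleO ?_
    simpa [hN', hN] using (N.hasDerivAt a).isLittleO
  obtain ⟨c, hc⟩ := hasStrictFDerivAt_conjRatio p ha
  have hτ := hc.hasFDerivAt
  set T : ℂ →L[ℝ] ℂ := (conjCLE : ℂ →L[ℝ] ℂ) ∘L (c • (1 : ℂ →L[ℝ] ℂ))
  have hτ' : HasFDerivAt (conjRatio p q) T (conjRatio p q a) := by rwa [hfix]
  have hTT : T ∘L T = ContinuousLinearMap.id ℝ ℂ := by
    have hid : HasFDerivAt (fun x => conjRatio p q (conjRatio p q x) - x)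
        (0 : ℂ →L[ℝ] ℂ) a := by
      refine .of_isLittleO ?_
      simpa [hfix] using hsmall
    exact sub_eq_zero.mp (((hτ'.comp a hτ).fun_sub (hasFDerivAt_id a)).unique hid)
  have hcc : conj c * c = 1 := by
    have h1 := DFunLike.congr_fun hTT 1
    simpa [T] using h1
  obtain ⟨h, h0, hh⟩ := exists_conj_mul_eq_self hcc
  have hsub : HasFDerivAt (fun x => x - conjRatio p q x) (ContinuousLinearMap.id ℝ ℂ - T) a :=
    (hasFDerivAt_id a).fun_sub hτ
  rw [hsub.fderiv] at hnd
  exact h0 (hnd (by simp [T, hh]))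

lemma rootMultiplicity_returnPoly_eq_one (hp : p.natDegree ≤ n) (hq : q.natDegree ≤ n)
    (ha : q.eval a ≠ 0) (hfix : conjRatio p q a = a)
    (hnd : Function.Injective (fderiv ℝ (fun x => x - conjRatio p q x) a)) :
    (returnPoly n p q p q).rootMultiplicity a = 1 := by
  have hN' := eval_derivative_returnPoly_ne_zero hp hq ha hfix hnd
  have hN : returnPoly n p q p q ≠ 0 := fun h => hN' (by rw [h, derivative_zero, eval_zero])
  have hroot : (returnPoly n p q p q).IsRoot a := by
    rw [IsRoot.def, eval_returnPoly_of_ne_zero hp hq ha (by rwa [hfix]), hfix, hfix, sub_self,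
      mul_zero]
  refine le_antisymm (not_lt.mp fun h => hN' ?_) ((rootMultiplicity_pos hN).mpr hroot)
  exact ((one_lt_rootMultiplicity_iff_isRoot hN).mp h).2

lemma rootMultiplicity_zero_returnPoly_reflect (hp : p.natDegree ≤ n) (hq : q.natDegree ≤ n)
    (hN : returnPoly n p q p q ≠ 0) :
    (returnPoly n (p.reflect n) (q.reflect n) q p).rootMultiplicity 0 =
      n * n + 1 - (returnPoly n p q p q).natDegree := by
  rw [returnPoly_reflect hp hq, ← reflect_neg, rootMultiplicity_zero_reflect, natDegree_neg]
  · exact (natDegree_neg _).trans_le (natDegree_returnPoly_le hp hq p q)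
  · exact neg_ne_zero.mpr hN

lemma isRoot_returnPoly_iff_of_eval_eq_zero (hp : p.natDegree ≤ n) (hq : q.natDegree ≤ n)
    (hqn : q.coeff n ≠ 0) (hpa : p.eval a ≠ 0) (hqa : q.eval a = 0) :
    (returnPoly n p q p q).IsRoot a ↔ conj (p.coeff n / q.coeff n) = a := by
  have hinv : conjRatio q p a = 0 := by rw [conjRatio, hqa, zero_div, map_zero]
  rw [← returnPoly_swap_reflect, isRoot_returnPoly_iff (natDegree_reflect_le_of_le hp)
    (natDegree_reflect_le_of_le hq) _ hpa, hinv, conjRatio_reflect_zero, eval_zero_reflect,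
    and_iff_right hqn]
  exact Or.inr (by rwa [hinv, eval_zero_reflect])

lemma isRoot_zero_returnPoly_reflect_iff (hp : p.natDegree ≤ n) (hq : q.natDegree ≤ n)
    (hqn : q.coeff n ≠ 0) (hpq : ∀ x, p.eval x ≠ 0 ∨ q.eval x ≠ 0) :
    (returnPoly n (p.reflect n) (q.reflect n) q p).IsRoot 0 ↔
      q.eval (conj (p.coeff n / q.coeff n)) = 0 := by
  rw [isRoot_returnPoly_iff hq hp (hpq _).symm (by rwa [eval_zero_reflect]),
    conjRatio_reflect_zero, conjRatio, _root_.map_eq_zero, div_eq_zero_iff]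
  have := hpq (conj (p.coeff n / q.coeff n))
  tauto

lemma rootMultiplicity_returnPoly_of_eval_eq_zero (hp : p.natDegree ≤ n) (hq : q.natDegree ≤ n)
    (hqn : q.coeff n ≠ 0) (hN : returnPoly n p q p q ≠ 0) (hpa : p.eval a ≠ 0)
    (hqa : q.eval a = 0) (ha : conj (p.coeff n / q.coeff n) = a) :
    (returnPoly n p q p q).rootMultiplicity a =
      n * n + 1 - (returnPoly n p q p q).natDegree := by
  have hv : conjRatio (p.reflect n) (q.reflect n) 0 = a := by rw [conjRatio_reflect_zero, ha]
  have hN₀ : returnPoly n (p.reflect n) (q.reflect n) q p ≠ 0 := by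
    rwa [returnPoly_reflect hp hq, neg_ne_zero, Ne, reflect_eq_zero_iff]
  have hfix : conjRatio q p (conjRatio (p.reflect n) (q.reflect n) 0) = 0 := by
    rw [hv, conjRatio, hqa, zero_div, map_zero]
  have h := rootMultiplicity_returnPoly_conjRatio (natDegree_reflect_le_of_le hp)
    (natDegree_reflect_le_of_le hq) hq hp hN₀ ((returnPoly_swap_reflect n p q).trans_ne hN)
    (by rwa [eval_zero_reflect]) (by rwa [hv]) hfix
  rwa [hv, returnPoly_swap_reflect, rootMultiplicity_zero_returnPoly_reflect hp hq hN] at h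

/- The defect `n * n + 1 - natDegree` is the multiplicity of `∞` as a root, and
`conj (p.coeff n / q.coeff n)` is the value of the map at `∞`. -/
lemma sum_rootMultiplicity_returnPoly_poles (hp : p.natDegree ≤ n) (hq : q.natDegree ≤ n)
    (hqn : q.coeff n ≠ 0) (hpq : ∀ x, p.eval x ≠ 0 ∨ q.eval x ≠ 0)
    (hN : returnPoly n p q p q ≠ 0) :
    ∑ a ∈ (returnPoly n p q p q).roots.toFinset with q.eval a = 0,
        (returnPoly n p q p q).rootMultiplicity a =
      n * n + 1 - (returnPoly n p q p q).natDegree := by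
  have hpole {a : ℂ} (hqa : q.eval a = 0) := (hpq a).resolve_right (not_not.mpr hqa)
  by_cases hv : q.eval (conj (p.coeff n / q.coeff n)) = 0
  · rw [Finset.sum_eq_single_of_mem (conj (p.coeff n / q.coeff n))]
    · exact rootMultiplicity_returnPoly_of_eval_eq_zero hp hq hqn hN (hpole hv) hv rfl
    · rw [Finset.mem_filter, Multiset.mem_toFinset, mem_roots hN]
      exact ⟨(isRoot_returnPoly_iff_of_eval_eq_zero hp hq hqn (hpole hv) hv).mpr rfl, hv⟩
    · intro a ha hne
      rw [Finset.mem_filter, Multiset.mem_toFinset, mem_roots hN] at ha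
      exact absurd
        ((isRoot_returnPoly_iff_of_eval_eq_zero hp hq hqn (hpole ha.2) ha.2).mp ha.1).symm hne
  · have hinf := mt (isRoot_zero_returnPoly_reflect_iff hp hq hqn hpq).mp hv
    rw [← rootMultiplicity_zero_returnPoly_reflect hp hq hN, rootMultiplicity_eq_zero hinf]
    refine Finset.sum_eq_zero fun a ha => rootMultiplicity_eq_zero fun hroot => hv ?_
    have hqa := (Finset.mem_filter.mp ha).2
    rwa [(isRoot_returnPoly_iff_of_eval_eq_zero hp hq hqn (hpole hqa) hqa).mp hroot]

lemma sum_rootMultiplicity_returnRoots (hp : p.natDegree ≤ n) (hq : q.natDegree ≤ n)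
    (hqn : q.coeff n ≠ 0) (hpq : ∀ x, p.eval x ≠ 0 ∨ q.eval x ≠ 0)
    (hN : returnPoly n p q p q ≠ 0) :
    ∑ a ∈ returnRoots n p q, ((returnPoly n p q p q).rootMultiplicity a : ZMod 2) = n + 1 := by
  have htotal : ∑ a ∈ (returnPoly n p q p q).roots.toFinset,
      (returnPoly n p q p q).rootMultiplicity a = (returnPoly n p q p q).natDegree := by
    simp_rw [← count_roots]
    rw [Multiset.toFinset_sum_count_eq, IsAlgClosed.card_roots_eq_natDegree]
  have hpoles := sum_rootMultiplicity_returnPoly_poles hp hq hqn hpq hN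
  rw [← Finset.sum_filter_add_sum_filter_not _ (fun a => q.eval a = 0), hpoles] at htotal
  have hdeg := natDegree_returnPoly_le hp hq p q
  have hnat : ∑ a ∈ returnRoots n p q, (returnPoly n p q p q).rootMultiplicity a +
      2 * (n * n + 1 - (returnPoly n p q p q).natDegree) = n ^ 2 + 1 := by
    rw [returnRoots]
    lia
  simpa [CharTwo.two_eq_zero, ZMod.pow_card] using congrArg (Nat.cast : ℕ → ZMod 2) hnat

lemma mem_returnRoots_iff (hp : p.natDegree ≤ n) (hq : q.natDegree ≤ n)
    (hpq : ∀ x, p.eval x ≠ 0 ∨ q.eval x ≠ 0) (hN : returnPoly n p q p q ≠ 0) :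
    a ∈ returnRoots n p q ↔ q.eval a ≠ 0 ∧ q.eval (conjRatio p q a) ≠ 0 ∧
      conjRatio p q (conjRatio p q a) = a := by
  rw [returnRoots, Finset.mem_filter, Multiset.mem_toFinset, mem_roots hN, and_comm]
  exact and_congr_right fun ha => isRoot_returnPoly_iff hp hq (hpq _) ha

lemma card_filter_fixed_returnRoots (hp : p.natDegree ≤ n) (hq : q.natDegree ≤ n)
    (hqn : q.coeff n ≠ 0) (hpq : ∀ x, p.eval x ≠ 0 ∨ q.eval x ≠ 0)
    (hN : returnPoly n p q p q ≠ 0)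
    (hnd : ∀ a, q.eval a ≠ 0 → conjRatio p q a = a →
      Function.Injective (fderiv ℝ (fun x => x - conjRatio p q x) a)) :
    (Finset.card {a ∈ returnRoots n p q | conjRatio p q a = a} : ZMod 2) = n + 1 := by
  have hmem {a : ℂ} := mem_returnRoots_iff (a := a) hp hq hpq hN
  have hsimple : ∀ a ∈ {a ∈ returnRoots n p q | conjRatio p q a = a},
      ((returnPoly n p q p q).rootMultiplicity a : ZMod 2) = 1 := by
    intro a ha
    obtain ⟨hroot, hfix⟩ := Finset.mem_filter.mp ha
    have hqa := (hmem.mp hroot).1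
    rw [rootMultiplicity_returnPoly_eq_one hp hq hqa hfix (hnd a hqa hfix), Nat.cast_one]
  rw [← sum_rootMultiplicity_returnRoots hp hq hqn hpq hN,
    sum_eq_sum_filter_fixed_of_involution (τ := conjRatio p q), Finset.sum_congr rfl hsimple,
    Finset.sum_const, nsmul_one]
  · intro a ha
    obtain ⟨hqa, hb, hfix⟩ := hmem.mp ha
    exact hmem.mpr ⟨hb, by rwa [hfix], by rw [hfix]⟩
  · exact fun a ha => (hmem.mp ha).2.2
  · intro a ha
    obtain ⟨hqa, hb, hfix⟩ := hmem.mp ha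
    rw [rootMultiplicity_returnPoly_conjRatio hp hq hp hq hN hN hqa hb hfix]

theorem finite_and_odd_ncard_fixedPoints_conjRatio_iff (hq0 : q ≠ 0)
    (hp : p.natDegree ≤ q.natDegree) (hpq : IsCoprime p q)
    (hnd : ∀ a, q.eval a ≠ 0 → conjRatio p q a = a →
      Function.Injective (fderiv ℝ (fun x => x - conjRatio p q x) a)) :
    {a | q.eval a ≠ 0 ∧ conjRatio p q a = a}.Finite ∧
      (Odd {a | q.eval a ≠ 0 ∧ conjRatio p q a = a}.ncard ↔ Even q.natDegree) := by
  have hpq' := eval_ne_zero_or_of_isCoprime hpq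
  by_cases hN : returnPoly q.natDegree p q p q = 0
  · have hempty : {a | q.eval a ≠ 0 ∧ conjRatio p q a = a} = ∅ := by
      refine Set.eq_empty_of_forall_notMem fun a ⟨hqa, hfix⟩ => ?_
      refine eval_derivative_returnPoly_ne_zero hp le_rfl hqa hfix (hnd a hqa hfix) ?_
      rw [hN, derivative_zero, eval_zero]
    rw [hempty, Set.ncard_empty, natDegree_eq_one_of_returnPoly_eq_zero hp hq0 hpq hN]
    exact ⟨Set.finite_empty, by decide⟩
  · have hset : {a | q.eval a ≠ 0 ∧ conjRatio p q a = a} =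
        ↑{a ∈ returnRoots q.natDegree p q | conjRatio p q a = a} := by
      ext a
      rw [Finset.mem_coe, Finset.mem_filter, mem_returnRoots_iff hp le_rfl hpq' hN]
      exact and_congr_left fun hfix =>
        ⟨fun hqa => ⟨hqa, by rwa [hfix], by rw [hfix, hfix]⟩, And.left⟩
    have hcard := card_filter_fixed_returnRoots hp le_rfl (leadingCoeff_ne_zero.mpr hq0) hpq' hN
      hnd
    rw [hset, Set.ncard_coe_finset, ← ZMod.natCast_eq_one_iff_odd, hcard, add_eq_right,
      ZMod.natCast_eq_zero_iff_even]
    exact ⟨Finset.finite_toSet _, Iff.rfl⟩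

end FixedPoints

lemma conjRatio_partialFractionNum_nodal {ι : Type*} [Fintype ι] [DecidableEq ι] {z : ι → ℂ}
    {a : ℂ} (ha : ∀ j, a ≠ z j) (σ : ι → ℂ) (w : ℂ) :
    conjRatio (partialFractionNum z (fun j => conj (σ j)) (conj w))
      (Lagrange.nodal Finset.univ z) a = w + ∑ j, σ j / (conj a - conj (z j)) := by
  simp only [conjRatio, eval_partialFractionNum_div ha, map_add, map_sum, map_div₀, map_sub,
    conj_conj]

end RationalLens

open RationalLens

theorem point_mass_lens_image_parity_general {ι : Type*} [Fintype ι] {z : ι → ℂ}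
    (hz : Function.Injective z) {σ : ι → ℂ} (hσ : ∀ j, σ j ≠ 0) {w : ℂ} {F : ℂ → ℂ}
    (hF : ∀ a, (∀ j, a ≠ z j) → F a = a - (∑ j, σ j / (conj a - conj (z j))) - w)
    (hnd : ∀ a, (∀ j, a ≠ z j) → F a = 0 → Function.Injective (fderiv ℝ F a)) :
    {a | (∀ j, a ≠ z j) ∧ F a = 0}.Finite ∧
      (Odd {a | (∀ j, a ≠ z j) ∧ F a = 0}.ncard ↔ Even (Fintype.card ι)) := by
  classical
  set p := partialFractionNum z (fun j => conj (σ j)) (conj w)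
  set q := Lagrange.nodal Finset.univ z
  have hq : q.natDegree = Fintype.card ι := by rw [Lagrange.natDegree_nodal, Finset.card_univ]
  have hpole (a : ℂ) : q.eval a ≠ 0 ↔ ∀ j, a ≠ z j := by
    simp [q, Lagrange.eval_nodal, Finset.prod_eq_zero_iff, sub_eq_zero]
  have hFa (a : ℂ) (ha : ∀ j, a ≠ z j) : F a = a - conjRatio p q a := by
    rw [hF a ha, conjRatio_partialFractionNum_nodal ha]
    ring
  have hset : {a | (∀ j, a ≠ z j) ∧ F a = 0} = {a | q.eval a ≠ 0 ∧ conjRatio p q a = a} := by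
    ext a
    rw [Set.mem_ofPred_eq, Set.mem_ofPred_eq, hpole]
    exact and_congr_right fun ha => by rw [hFa a ha, sub_eq_zero, eq_comm]
  rw [hset, ← hq]
  refine finite_and_odd_ncard_fixedPoints_conjRatio_iff Lagrange.nodal_ne_zero
    ((natDegree_partialFractionNum_le _ _ _).trans_eq hq.symm)
    (isCoprime_partialFractionNum_nodal hz (fun j => (_root_.map_ne_zero _).mpr (hσ j)) _)
    fun a hqa hfix => ?_
  have hFτ : F =ᶠ[𝓝 a] fun x => x - conjRatio p q x := by
    filter_upwards [q.continuousAt.eventually_ne hqa] with x hx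
    exact hFa x ((hpole x).mp hx)
  obtain ⟨ha, hzero⟩ := hset.superset ⟨hqa, hfix⟩
  rw [← hFτ.fderiv_eq]
  exact hnd a ha hzero

/-- For an `n`-point-mass planar lens without shear, if all images are nondegenerate
(the real Fréchet derivative of the lens map is invertible there), then the number of
images is even when `n` is odd and odd when `n` is even. -/
theorem point_mass_lens_image_parity (n : ℕ) (hn : 2 ≤ n)
    (z : Fin n → ℂ) (hz : Function.Injective z)
    (σ : Fin n → ℝ) (hσ : ∀ j, 0 < σ j) (w : ℂ)
    (F : ℂ → ℂ)
    (hF : ∀ p : ℂ, (∀ j, p ≠ z j) →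
      F p = p - (∑ j, (σ j : ℂ) / (starRingEnd ℂ p - starRingEnd ℂ (z j))) - w)
    (S : Set ℂ)
    (hS : S = {p : ℂ | (∀ j, p ≠ z j) ∧ F p = 0})
    (hfin : S.Finite)
    (hnd : ∀ p ∈ S, Function.Bijective (fderiv ℝ F p)) :
    (Odd n → Even S.ncard) ∧ (Even n → Odd S.ncard) := by
  subst hS
  have hparity := (point_mass_lens_image_parity_general hz
    (fun j => ofReal_ne_zero.mpr (hσ j).ne') hF fun a ha h0 => (hnd a ⟨ha, h0⟩).injective).2
  rw [Fintype.card_fin] at hparity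
  exact ⟨fun h => by rwa [← Nat.not_odd_iff_even, hparity, Nat.not_even_iff_odd], hparity.mpr⟩
end
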